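/- arXiv:2301.07031 — 4 statements merged into one kernel-verified Lean document; each statement's English description precedes it below -/
import Mathlib

section
/- Let d ≥ 1 and let S ⊂ ℤ^d \ {0} be a finite symmetric set (S = -S), and let a : S → ℂ satisfy a_{-k} = conj(a_k), so that the trigonometric polynomial f(x) = Σ_{k ∈ S} a_k · exp(2πi⟨k, x⟩) defines a real-valued function on the torus 𝕋^d = ℝ^d/ℤ^d with mean value 0. Let Λ = {‖k‖ : k ∈ S} be the set of distinct Euclidean norms of frequencies in S. Then f has a zero in every closed ball (with respect to the torus metric) of radius r = d^{3/2} · Σ_{λ ∈ Λ} 1/λ; that is, for every x₀ ∈ 𝕋^d there exists y ∈ 𝕋^d with dist(y, x₀) ≤ d^{3/2} Σ_{λ ∈ Λ} 1/λ and f(y) = 0. -/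
open scoped Real

/-- The quotient (torus) distance on `ℝ^d / ℤ^d`, computed between lifts:
the infimum of Euclidean distances between `x` and all `ℤ^d`-translates of `y`. -/
noncomputable def torusDist {d : ℕ} (x y : EuclideanSpace ℝ (Fin d)) : ℝ :=
  ⨅ m : Fin d → ℤ, dist x (y + (WithLp.equiv 2 (Fin d → ℝ)).symm fun i => (m i : ℝ))

/-!
Let `μ` be a probability measure supported in the ball of radius `R` about `0` whose characteristic
function vanishes at every frequency of `f`. Then the average of `f` against any translate of `μ`
is `0`, so in every closed ball of radius `R` the real part of `f` takes values `≤ 0` and values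
`≥ 0`, and hence vanishes somewhere.

To annihilate all frequencies of one length `λ`, put the weight `∏_{j ≠ i} cos (π uⱼ / (2h))` on
each pair of opposite faces `uᵢ = ± h` of the cube `[-h, h]^d`. Up to a factor, these faces carry
the singular part of the Laplacian of `v(u) = ∏ⱼ cos (π uⱼ / (2h))`, extended by `0` outside the
cube, while inside the cube `Δv = -d (π / (2h))² v`. So the measure is a multiple of
`Δv + d (π / (2h))² v`, and its Fourier transform vanishes at all `ξ` with
`(2π‖ξ‖)² = d (π / (2h))²`. The choice `h = √d / (4λ)` makes this the sphere `‖ξ‖ = λ` and puts the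
cube into the ball of radius `√d h = d / (4λ)`. Convolving these measures over the distinct lengths
annihilates all frequencies at once, and the radii add up.
-/

open MeasureTheory Set
open scoped RealInnerProductSpace ENNReal

section Support

lemma ae_norm_le_conv {E : Type*} [SeminormedAddCommGroup E] [SecondCountableTopology E]
    [MeasurableSpace E] [BorelSpace E] {μ ν : Measure E} {r s : ℝ}
    (hμ : ∀ᵐ u ∂μ, ‖u‖ ≤ r) (hν : ∀ᵐ u ∂ν, ‖u‖ ≤ s) : ∀ᵐ u ∂(μ ∗ ν), ‖u‖ ≤ r + s := by
  rw [Measure.conv, ae_map_iff (by fun_prop) (measurableSet_le (by fun_prop) (by fun_prop))]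
  filter_upwards [Measure.quasiMeasurePreserving_fst.ae hμ,
    Measure.quasiMeasurePreserving_snd.ae hν] with u hu_fst hu_snd
  exact norm_add_le_of_le hu_fst hu_snd

variable {ι : Type*} [Fintype ι]

lemma norm_le_sqrt_card_mul {h : ℝ} {x : EuclideanSpace ℝ ι} (hx : ∀ i, |x i| ≤ h) :
    ‖x‖ ≤ √(Fintype.card ι) * h := by
  have bound_nonneg : 0 ≤ √(Fintype.card ι) * h := by
    rcases isEmpty_or_nonempty ι with _ | ⟨⟨i⟩⟩
    · simp
    · exact mul_nonneg (Real.sqrt_nonneg _) ((abs_nonneg _).trans (hx i))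
  refine (abs_le_of_sq_le_sq' ?_ bound_nonneg).2
  calc ‖x‖ ^ 2 = ∑ i, x i ^ 2 := EuclideanSpace.real_norm_sq_eq x
    _ ≤ ∑ _i : ι, h ^ 2 := Finset.sum_le_sum fun i _ => sq_le_sq.2 ((hx i).trans (le_abs_self h))
    _ = (√(Fintype.card ι) * h) ^ 2 := by simp [mul_pow]

lemma ae_norm_le_map_toLp_pi {μ : ι → Measure ℝ} [∀ i, SigmaFinite (μ i)] {h : ℝ}
    (hμ : ∀ i, ∀ᵐ s ∂μ i, |s| ≤ h) :
    ∀ᵐ x ∂(Measure.pi μ).map (WithLp.toLp 2), ‖x‖ ≤ √(Fintype.card ι) * h := by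
  rw [ae_map_iff (by fun_prop) (measurableSet_le (by fun_prop) (by fun_prop))]
  filter_upwards [Filter.eventually_all.2 fun i => Measure.tendsto_eval_ae_ae.eventually (hμ i)]
    with x hx using norm_le_sqrt_card_mul hx

end Support

section TrigPoly

variable {E κ : Type*} [NormedAddCommGroup E] [InnerProductSpace ℝ E]

/-- The trigonometric polynomial `x ↦ ∑ k ∈ S, a k * exp (2πi ⟪ξ k, x⟫)` with frequencies `ξ k`.
The frequencies are arbitrary vectors, indexed by `κ`, so `trigPoly S ξ a` need not be periodic. -/
noncomputable def trigPoly (S : Finset κ) (ξ : κ → E) (a : κ → ℂ) (x : E) : ℂ :=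
  ∑ k ∈ S, a k * Complex.exp (2 * π * ⟪ξ k, x⟫ * Complex.I)

variable (S : Finset κ) (ξ : κ → E) (a : κ → ℂ)

lemma continuous_trigPoly : Continuous (trigPoly S ξ a) := by
  unfold trigPoly
  fun_prop

lemma norm_trigPoly_le (x : E) : ‖trigPoly S ξ a x‖ ≤ ∑ k ∈ S, ‖a k‖ := by
  refine (norm_sum_le _ _).trans_eq (Finset.sum_congr rfl fun k _ => ?_)
  have norm_exp : ‖Complex.exp (2 * π * ⟪ξ k, x⟫ * Complex.I)‖ = 1 := by
    exact_mod_cast Complex.norm_exp_ofReal_mul_I (2 * π * ⟪ξ k, x⟫)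
  rw [norm_mul, norm_exp, mul_one]

variable {S ξ a} in
lemma trigPoly_im_eq_zero [InvolutiveNeg κ] (hS : ∀ k ∈ S, -k ∈ S) (hξ : ∀ k ∈ S, ξ (-k) = -ξ k)
    (ha : ∀ k ∈ S, a (-k) = starRingEnd ℂ (a k)) (x : E) : (trigPoly S ξ a x).im = 0 := by
  rw [← Complex.conj_eq_iff_im, trigPoly, map_sum]
  refine Finset.sum_bij' (fun k _ => -k) (fun k _ => -k) hS hS (by simp) (by simp) fun k hk => ?_
  simp [ha k hk, hξ k hk, ← Complex.exp_conj, Complex.conj_ofNat]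

variable [MeasurableSpace E] [BorelSpace E]

lemma integrable_trigPoly_add (μ : Measure E) [IsFiniteMeasure μ] (x : E) :
    Integrable (fun u => trigPoly S ξ a (x + u)) μ :=
  .of_bound ((continuous_trigPoly S ξ a).comp (continuous_const_add x)).aestronglyMeasurable
    _ (.of_forall fun u => norm_trigPoly_le S ξ a (x + u))

lemma integral_trigPoly_add (μ : Measure E) [IsFiniteMeasure μ] (x : E) :
    ∫ u, trigPoly S ξ a (x + u) ∂μ =
      trigPoly S ξ (fun k => a k * charFun μ ((2 * π) • ξ k)) x := by
  have exp_add (k : κ) (u : E) : a k * Complex.exp (2 * π * ⟪ξ k, x + u⟫ * Complex.I) =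
      a k * Complex.exp (2 * π * ⟪ξ k, x⟫ * Complex.I) *
        Complex.exp (⟪u, (2 * π) • ξ k⟫ * Complex.I) := by
    rw [mul_assoc (a k), ← Complex.exp_add, inner_add_right, real_inner_smul_right,
      real_inner_comm u]
    push_cast
    ring_nf
  have integrable_term (k : κ) :
      Integrable (fun u => a k * Complex.exp (2 * π * ⟪ξ k, x + u⟫ * Complex.I)) μ := by
    simpa [trigPoly] using integrable_trigPoly_add {k} ξ a μ x
  simp only [trigPoly]
  rw [integral_finsetSum _ fun k _ => integrable_term k]
  refine Finset.sum_congr rfl fun k _ => ?_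
  simp only [exp_add, integral_const_mul, charFun_apply]
  ring

variable {S ξ} in
lemma exists_re_trigPoly_eq_zero_of_charFun_eq_zero {μ : Measure E} [IsProbabilityMeasure μ] {R : ℝ}
    (hR : ∀ᵐ u ∂μ, ‖u‖ ≤ R) (hμ : ∀ k ∈ S, charFun μ ((2 * π) • ξ k) = 0) (x : E) :
    ∃ y ∈ Metric.closedBall x R, (trigPoly S ξ a y).re = 0 := by
  have integrable_re : Integrable (fun u => (trigPoly S ξ a (x + u)).re) μ :=
    (integrable_trigPoly_add S ξ a μ x).re
  have average_eq_zero : ∫ u, (trigPoly S ξ a (x + u)).re ∂μ = 0 := by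
    have integral_eq_zero : ∫ u, trigPoly S ξ a (x + u) ∂μ = 0 := by
      rw [integral_trigPoly_add]
      exact Finset.sum_eq_zero fun k hk => by simp [hμ k hk]
    simpa [integral_eq_zero] using integral_re (integrable_trigPoly_add S ξ a μ x)
  have add_mem {u : E} (hu : u ∉ {u | ¬‖u‖ ≤ R}) : x + u ∈ Metric.closedBall x R := by
    simpa using hu
  obtain ⟨u, hu, hu_le⟩ := exists_notMem_null_le_integral integrable_re (ae_iff.1 hR)
  obtain ⟨v, hv, hv_ge⟩ := exists_notMem_null_integral_le integrable_re (ae_iff.1 hR)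
  rw [average_eq_zero] at hu_le hv_ge
  exact (convex_closedBall x R).isPreconnected.intermediate_value (add_mem hu) (add_mem hv)
    (Complex.continuous_re.comp (continuous_trigPoly S ξ a)).continuousOn ⟨hu_le, hv_ge⟩

end TrigPoly

section Interval

/-- The probability measure with density `π / (4h) * cos (π s / (2h))` on `[-h, h]`. -/
noncomputable def cosineMeasure (h : ℝ) : Measure ℝ :=
  (volume.restrict (Icc (-h) h)).withDensity fun s =>
    ENNReal.ofReal (π / (4 * h) * Real.cos (π / (2 * h) * s))

/-- The uniform probability measure on `{-h, h}`. -/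
noncomputable def endpointMeasure (h : ℝ) : Measure ℝ :=
  (2⁻¹ : ℝ≥0∞) • (Measure.dirac h + Measure.dirac (-h))

instance (h : ℝ) : IsProbabilityMeasure (endpointMeasure h) :=
  ⟨by simp [endpointMeasure, ENNReal.inv_two_add_inv_two]⟩

lemma charFun_endpointMeasure (h t : ℝ) : charFun (endpointMeasure h) t = Complex.cos (h * t) := by
  rw [charFun_apply_real, endpointMeasure, integral_smul_measure, integral_add_measure
    (integrable_dirac (by simp)) (integrable_dirac (by simp)), integral_dirac, integral_dirac,
    Complex.cos]
  simp only [ENNReal.toReal_inv, ENNReal.toReal_ofNat, Complex.ofReal_neg, mul_neg, neg_mul,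
    smul_add, Complex.real_smul, Complex.ofReal_inv, Complex.ofReal_ofNat]
  ring_nf

lemma integral_cos_mul_exp {ω h : ℝ} (hω : ω * h = π / 2) (t : ℝ) :
    (ω ^ 2 - t ^ 2) * ∫ s in -h..h, Complex.cos (ω * s) * Complex.exp (t * s * Complex.I) =
      2 * ω * Complex.cos (h * t) := by
  let F (s : ℂ) : ℂ :=
    (ω * Complex.sin (ω * s) + Complex.I * t * Complex.cos (ω * s)) *
      Complex.exp (t * s * Complex.I)
  have hasDerivAt_F (s : ℝ) : HasDerivAt (fun s : ℝ => F s)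
      ((ω ^ 2 - t ^ 2) * (Complex.cos (ω * s) * Complex.exp (t * s * Complex.I))) s := by
    have hω_mul : HasDerivAt (fun z : ℂ => ω * z) ω s := by
      simpa using (hasDerivAt_id (s : ℂ)).const_mul (ω : ℂ)
    have ht_mul : HasDerivAt (fun z : ℂ => t * z * Complex.I) (t * Complex.I) s := by
      simpa using ((hasDerivAt_id (s : ℂ)).const_mul (t : ℂ)).mul_const Complex.I
    refine (((hω_mul.csin.const_mul _).add (hω_mul.ccos.const_mul _)).mul
      ht_mul.cexp).congr_deriv ?_ |>.comp_ofReal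
    simp only [Pi.add_apply]
    linear_combination
      t ^ 2 * Complex.cos (ω * s) * Complex.exp (t * s * Complex.I) * Complex.I_sq
  have hωh : (ω : ℂ) * h = π / 2 := by exact_mod_cast hω
  rw [← intervalIntegral.integral_const_mul, intervalIntegral.integral_eq_sub_of_hasDerivAt
    (fun s _ => hasDerivAt_F s) (Continuous.intervalIntegrable (by fun_prop) _ _)]
  simp only [F, Complex.ofReal_neg, mul_neg, hωh, Complex.sin_neg, Complex.cos_neg,
    Complex.sin_pi_div_two, Complex.cos_pi_div_two]
  rw [Complex.cos]
  ring_nf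

lemma charFun_cosineMeasure {h : ℝ} (hh : 0 < h) (t : ℝ) :
    charFun (cosineMeasure h) t = π / (4 * h) *
      ∫ s in -h..h, Complex.cos (π / (2 * h) * s) * Complex.exp (t * s * Complex.I) := by
  have density_nonneg : ∀ s ∈ Icc (-h) h, 0 ≤ π / (4 * h) * Real.cos (π / (2 * h) * s) := by
    intro s ⟨hs_ge, hs_le⟩
    refine mul_nonneg (by positivity) (Real.cos_nonneg_of_mem_Icc ⟨?_, ?_⟩)
    · calc -(π / 2) = π / (2 * h) * -h := by field_simp
        _ ≤ π / (2 * h) * s := by gcongr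
    · calc π / (2 * h) * s ≤ π / (2 * h) * h := by gcongr
        _ = π / 2 := by field_simp
  rw [charFun_apply_real, cosineMeasure, integral_withDensity_eq_integral_toReal_smul
    (by fun_prop) (by simp), intervalIntegral.integral_of_le (by linarith),
    ← integral_Icc_eq_integral_Ioc, ← integral_const_mul]
  refine setIntegral_congr_fun measurableSet_Icc fun s hs => ?_
  simp only [ENNReal.toReal_ofReal (density_nonneg s hs), Complex.real_smul]
  push_cast
  ring

/-- Up to a factor, the endpoint measure is `φ'' + (π / (2h))² φ`, where `φ` is the density of the
cosine measure. -/
lemma charFun_endpointMeasure_eq_mul_charFun_cosineMeasure {h : ℝ} (hh : 0 < h) (t : ℝ) :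
    charFun (endpointMeasure h) t =
      (1 - (2 * h * t / π) ^ 2) * charFun (cosineMeasure h) t := by
  have parts := integral_cos_mul_exp (show π / (2 * h) * h = π / 2 by field_simp) t
  push_cast at parts
  have hh' : (h : ℂ) ≠ 0 := by exact_mod_cast hh.ne'
  have hπ : (π : ℂ) ≠ 0 := by exact_mod_cast Real.pi_ne_zero
  rw [charFun_endpointMeasure, charFun_cosineMeasure hh]
  generalize (∫ s in -h..h, Complex.cos (π / (2 * h) * s) * Complex.exp (t * s * Complex.I)) = J
    at parts ⊢
  field_simp at parts ⊢
  linear_combination -parts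

lemma isProbabilityMeasure_cosineMeasure {h : ℝ} (hh : 0 < h) :
    IsProbabilityMeasure (cosineMeasure h) := by
  have charFun_zero_eq := charFun_endpointMeasure_eq_mul_charFun_cosineMeasure hh 0
  rw [charFun_zero, charFun_zero] at charFun_zero_eq
  rw [isProbabilityMeasure_iff_real]
  simpa using charFun_zero_eq.symm

lemma ae_abs_le_cosineMeasure (h : ℝ) : ∀ᵐ s ∂cosineMeasure h, |s| ≤ h := by
  refine (withDensity_absolutelyContinuous _ _).ae_le ?_
  filter_upwards [ae_restrict_mem measurableSet_Icc] with s hs using abs_le.2 hs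

lemma ae_abs_le_endpointMeasure {h : ℝ} (hh : 0 ≤ h) : ∀ᵐ s ∂endpointMeasure h, |s| ≤ h := by
  refine Measure.ae_smul_measure (ae_add_measure_iff.2 ⟨?_, ?_⟩) _ <;>
    simp [ae_dirac_eq, abs_of_nonneg hh]

end Interval

section Cube

variable {ι : Type*} [DecidableEq ι]

/-- The factors of the product measure on the pair of faces `u i = ± h` of the cube `[-h, h]^ι`:
the factor of the coordinate `j` is uniform on `{-h, h}` for `j = i` and has the cosine density
otherwise. -/
noncomputable def faceFactor (h : ℝ) (i j : ι) : Measure ℝ :=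
  if j = i then endpointMeasure h else cosineMeasure h

lemma isProbabilityMeasure_faceFactor {h : ℝ} (hh : 0 < h) (i j : ι) :
    IsProbabilityMeasure (faceFactor h i j) := by
  have := isProbabilityMeasure_cosineMeasure hh
  unfold faceFactor
  split_ifs <;> infer_instance

lemma ae_abs_le_faceFactor {h : ℝ} (hh : 0 ≤ h) (i j : ι) : ∀ᵐ s ∂faceFactor h i j, |s| ≤ h := by
  unfold faceFactor
  split_ifs
  exacts [ae_abs_le_endpointMeasure hh, ae_abs_le_cosineMeasure h]

variable [Fintype ι]

lemma prod_charFun_faceFactor {h : ℝ} (hh : 0 < h) (i : ι) (t : ι → ℝ) :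
    ∏ j, charFun (faceFactor h i j) (t j) =
      (1 - (2 * h * t i / π) ^ 2) * ∏ j, charFun (cosineMeasure h) (t j) := by
  have charFun_factor (j : ι) : charFun (faceFactor h i j) (t j) =
      (if j = i then 1 - (2 * h * t j / π : ℂ) ^ 2 else 1) * charFun (cosineMeasure h) (t j) := by
    unfold faceFactor
    split_ifs
    · exact charFun_endpointMeasure_eq_mul_charFun_cosineMeasure hh (t j)
    · rw [one_mul]
  simp only [charFun_factor, Finset.prod_mul_distrib, Finset.prod_ite_eq', Finset.mem_univ,
    if_true]

variable (ι) in
/-- The probability measure on the boundary of the cube `[-h, h]^ι` that averages, over all `i`, the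
product measures on the pairs of faces `u i = ± h`. -/
noncomputable def cubeBoundaryMeasure (h : ℝ) : Measure (EuclideanSpace ℝ ι) :=
  (Fintype.card ι : ℝ≥0∞)⁻¹ • ∑ i, (Measure.pi (faceFactor h i)).map (WithLp.toLp 2)

variable {h : ℝ}

lemma isProbabilityMeasure_cubeBoundaryMeasure [Nonempty ι] (hh : 0 < h) :
    IsProbabilityMeasure (cubeBoundaryMeasure ι h) := by
  have := isProbabilityMeasure_faceFactor (ι := ι) hh
  have (i : ι) : IsProbabilityMeasure
      ((Measure.pi (faceFactor h i)).map (WithLp.toLp 2 : _ → EuclideanSpace ℝ ι)) :=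
    Measure.isProbabilityMeasure_map (by fun_prop)
  exact ⟨by simp [cubeBoundaryMeasure, ENNReal.inv_mul_cancel]⟩

lemma ae_norm_le_cubeBoundaryMeasure (hh : 0 < h) :
    ∀ᵐ u ∂cubeBoundaryMeasure ι h, ‖u‖ ≤ √(Fintype.card ι) * h := by
  have := isProbabilityMeasure_faceFactor (ι := ι) hh
  rw [cubeBoundaryMeasure, ← Measure.sum_fintype]
  refine Measure.ae_smul_measure (Measure.ae_sum_iff.2 fun i => ?_) _
  exact ae_norm_le_map_toLp_pi (ae_abs_le_faceFactor hh.le i)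

lemma charFun_cubeBoundaryMeasure (hh : 0 < h) (t : EuclideanSpace ℝ ι) :
    charFun (cubeBoundaryMeasure ι h) t =
      (Fintype.card ι : ℂ)⁻¹ * (Fintype.card ι - (2 * h * ‖t‖ / π) ^ 2) *
        ∏ j, charFun (cosineMeasure h) (t j) := by
  have := isProbabilityMeasure_faceFactor (ι := ι) hh
  have charFun_sum : charFun (cubeBoundaryMeasure ι h) t = (Fintype.card ι : ℂ)⁻¹ *
      ∑ i, charFun ((Measure.pi (faceFactor h i)).map (WithLp.toLp 2)) t := by
    simp only [charFun_eq_integral_innerProbChar]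
    rw [cubeBoundaryMeasure, integral_smul_measure,
      integral_finsetSum_measure fun i _ => BoundedContinuousFunction.integrable _ _]
    simp
  have sum_factor : ∑ i, (1 - (2 * h * t i / π : ℂ) ^ 2) =
      Fintype.card ι - (2 * h * ‖t‖ / π : ℂ) ^ 2 := by
    have norm_sq : (‖t‖ : ℂ) ^ 2 = ∑ i, (t i : ℂ) ^ 2 := by
      exact_mod_cast EuclideanSpace.real_norm_sq_eq t
    simp [div_pow, mul_pow, norm_sq, Finset.mul_sum, Finset.sum_div]
  simp only [charFun_sum, charFun_pi, prod_charFun_faceFactor hh, ← Finset.sum_mul, sum_factor]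
  rw [← mul_assoc (Fintype.card ι : ℂ)⁻¹]

end Cube

section Annihilation

variable {ι : Type*} [Fintype ι] [Nonempty ι]

lemma exists_charFun_eq_zero_of_norm_eq {l : ℝ} (hl : 0 < l) :
    ∃ μ : Measure (EuclideanSpace ℝ ι), IsProbabilityMeasure μ ∧
      (∀ᵐ u ∂μ, ‖u‖ ≤ Fintype.card ι / 4 * (1 / l)) ∧
      ∀ ξ, ‖ξ‖ = l → charFun μ ((2 * π) • ξ) = 0 := by
  classical
  have sq_sqrt_card : √(Fintype.card ι) ^ 2 = (Fintype.card ι : ℝ) :=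
    Real.sq_sqrt (Nat.cast_nonneg _)
  have hh : 0 < √(Fintype.card ι) / (4 * l) := by positivity
  refine ⟨cubeBoundaryMeasure ι _, isProbabilityMeasure_cubeBoundaryMeasure hh, ?_, fun ξ hξ => ?_⟩
  · convert ae_norm_le_cubeBoundaryMeasure (ι := ι) hh using 3
    linear_combination -(1 / (4 * l)) * sq_sqrt_card
  · have card_eq : (Fintype.card ι : ℝ) =
        (2 * (√(Fintype.card ι) / (4 * l)) * ‖(2 * π) • ξ‖ / π) ^ 2 := by
      rw [norm_smul, hξ, Real.norm_of_nonneg Real.two_pi_pos.le]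
      field_simp
      linear_combination -16 * sq_sqrt_card
    rw [charFun_cubeBoundaryMeasure hh, sub_eq_zero.2 (by exact_mod_cast card_eq), mul_zero,
      zero_mul]

lemma exists_charFun_eq_zero_of_norm_mem (L : Finset ℝ) (hL : ∀ l ∈ L, 0 < l) :
    ∃ μ : Measure (EuclideanSpace ℝ ι), IsProbabilityMeasure μ ∧
      (∀ᵐ u ∂μ, ‖u‖ ≤ Fintype.card ι / 4 * ∑ l ∈ L, 1 / l) ∧
      ∀ ξ, ‖ξ‖ ∈ L → charFun μ ((2 * π) • ξ) = 0 := by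
  induction L using Finset.induction_on with
  | empty => exact ⟨Measure.dirac 0, inferInstance, by simp [ae_dirac_eq], by simp⟩
  | insert l L hl ih =>
    rw [Finset.forall_mem_insert] at hL
    obtain ⟨μ, _, hμ_le, hμ_zero⟩ := exists_charFun_eq_zero_of_norm_eq (ι := ι) hL.1
    obtain ⟨ν, _, hν_le, hν_zero⟩ := ih hL.2
    refine ⟨μ ∗ ν, inferInstance, ?_, fun ξ hξ => ?_⟩
    · rw [Finset.sum_insert hl, mul_add]
      exact ae_norm_le_conv hμ_le hν_le
    · rw [charFun_conv]
      rcases Finset.mem_insert.1 hξ with hξ | hξ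
      · rw [hμ_zero ξ hξ, zero_mul]
      · rw [hν_zero ξ hξ, mul_zero]

theorem trig_poly_zero_in_ball_general {κ : Type*} {S : Finset κ} {ξ : κ → EuclideanSpace ℝ ι}
    (hξ : ∀ k ∈ S, ξ k ≠ 0) (a : κ → ℂ) (x₀ : EuclideanSpace ℝ ι) :
    ∃ y, dist y x₀ ≤ Fintype.card ι / 4 * ∑ l ∈ S.image (fun k => ‖ξ k‖), 1 / l ∧
      (trigPoly S ξ a y).re = 0 := by
  obtain ⟨μ, _, hμ_le, hμ_zero⟩ := exists_charFun_eq_zero_of_norm_mem (ι := ι)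
    (S.image fun k => ‖ξ k‖) (by simpa using hξ)
  exact exists_re_trigPoly_eq_zero_of_charFun_eq_zero a hμ_le
    (fun k hk => hμ_zero _ (Finset.mem_image_of_mem _ hk)) x₀

end Annihilation

section Lattice

variable {d : ℕ}

/-- A point of `ℤ^d` as a vector of Euclidean space. -/
def latticePoint (k : Fin d → ℤ) : EuclideanSpace ℝ (Fin d) :=
  WithLp.toLp 2 fun i => (k i : ℝ)

lemma latticePoint_neg (k : Fin d → ℤ) : latticePoint (-k) = -latticePoint k := by
  ext i
  simp [latticePoint]

lemma latticePoint_eq_zero_iff {k : Fin d → ℤ} : latticePoint k = 0 ↔ k = 0 := by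
  simp [latticePoint, WithLp.ext_iff, funext_iff]

lemma norm_latticePoint (k : Fin d → ℤ) : ‖latticePoint k‖ = √(∑ i, (k i : ℝ) ^ 2) := by
  simp [latticePoint, EuclideanSpace.norm_eq]

lemma trigPoly_latticePoint (S : Finset (Fin d → ℤ)) (a : (Fin d → ℤ) → ℂ)
    (x : EuclideanSpace ℝ (Fin d)) :
    trigPoly S latticePoint a x =
      ∑ k ∈ S, a k * Complex.exp (2 * (π : ℂ) * Complex.I * ∑ i, (k i : ℂ) * (x i : ℂ)) := by
  refine Finset.sum_congr rfl fun k _ => ?_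
  simp [latticePoint, PiLp.inner_apply, mul_comm, mul_assoc]

lemma torusDist_le_dist (x y : EuclideanSpace ℝ (Fin d)) : torusDist x y ≤ dist x y := by
  refine (ciInf_le ⟨0, ?_⟩ (0 : Fin d → ℤ)).trans_eq ?_
  · rintro _ ⟨m, rfl⟩
    exact dist_nonneg
  · congr 1
    ext i
    simp

lemma div_four_le_rpow_three_halves (n : ℕ) : (n : ℝ) / 4 ≤ (n : ℝ) ^ ((3 : ℝ) / 2) := by
  rcases n.eq_zero_or_pos with rfl | hn
  · simp
  calc (n : ℝ) / 4 ≤ n := div_le_self n.cast_nonneg (by norm_num)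
    _ ≤ (n : ℝ) ^ ((3 : ℝ) / 2) :=
      Real.self_le_rpow_of_one_le (by exact_mod_cast hn) (by norm_num)

end Lattice

/-- **Theorem 1 (local sign changes of trigonometric polynomials).**
A real-valued, mean-zero trigonometric polynomial on `𝕋^d` with frequency set `S`
has a zero in every closed torus ball of radius `d^{3/2} · Σ_{λ ∈ Λ} 1/λ`,
where `Λ = {‖k‖ : k ∈ S}` is the set of distinct Euclidean norms of frequencies. -/
theorem trig_poly_zero_in_ball {d : ℕ} (hd : 1 ≤ d)
    (S : Finset (Fin d → ℤ)) (hS0 : (0 : Fin d → ℤ) ∉ S)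
    (hSsym : ∀ k ∈ S, -k ∈ S)
    (a : (Fin d → ℤ) → ℂ) (ha : ∀ k ∈ S, a (-k) = starRingEnd ℂ (a k))
    (f : EuclideanSpace ℝ (Fin d) → ℂ)
    (hf : ∀ x, f x = ∑ k ∈ S, a k *
      Complex.exp (2 * (π : ℂ) * Complex.I * ∑ i, (k i : ℂ) * (x i : ℂ)))
    (x₀ : EuclideanSpace ℝ (Fin d)) :
    ∃ y : EuclideanSpace ℝ (Fin d),
      torusDist y x₀ ≤ (d : ℝ) ^ ((3 : ℝ) / 2) *
        ∑ l ∈ S.image (fun k => Real.sqrt (∑ i, (k i : ℝ) ^ 2)), 1 / l ∧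
      f y = 0 := by
  have : Nonempty (Fin d) := ⟨⟨0, hd⟩⟩
  have f_eq (x) : f x = trigPoly S latticePoint a x := by rw [hf, trigPoly_latticePoint]
  have latticePoint_ne_zero : ∀ k ∈ S, latticePoint k ≠ 0 :=
    fun k hk hk0 => hS0 (latticePoint_eq_zero_iff.1 hk0 ▸ hk)
  obtain ⟨y, hy_dist, hy_re⟩ := trig_poly_zero_in_ball_general latticePoint_ne_zero a x₀
  simp only [norm_latticePoint, Fintype.card_fin] at hy_dist
  refine ⟨y, (torusDist_le_dist y x₀).trans (hy_dist.trans ?_), ?_⟩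
  · gcongr
    · exact Finset.sum_nonneg (Finset.forall_mem_image.2 fun k _ => by positivity)
    · exact div_four_le_rpow_three_halves d
  · rw [f_eq]
    exact Complex.ext hy_re (trigPoly_im_eq_zero hSsym (fun k _ => latticePoint_neg k) ha y)
end

section
/- Let d ≥ 2 and let p ∈ ℝ[x₁, …, x_d] be a polynomial whose restriction to the unit sphere 𝕊^{d-1} ⊂ ℝ^d can be written as p(x)|_{𝕊^{d-1}} = Σ_{k ∈ S} a_k f_k(x), where S is a finite set of positive integers, a_k ∈ ℝ, and each f_k is a harmonic polynomial homogeneous of degree k (i.e. f_k ∈ ℝ[x₁,…,x_d] is homogeneous of degree k with Δf_k = 0); in particular p has mean value 0 on 𝕊^{d-1}. Then p|_{𝕊^{d-1}} has a zero in every geodesic ball of radius r = π² d · Σ_{k ∈ S} 1/k; that is, for every x ∈ 𝕊^{d-1} there exists y ∈ 𝕊^{d-1} with geodesic distance arccos⟨x, y⟩ ≤ π² d Σ_{k ∈ S} 1/k and p(y) = 0. -/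
open scoped Real

/-!
Call a kernel `K ⟪x, y⟫` on the sphere a cap kernel of radius `θ` if it is nonnegative, positive at
`x = y`, and supported where `angle x y ≤ θ`. If the convolution of a continuous function with such
a kernel is nonpositive at `x`, then the function is nonpositive somewhere within `θ` of `x`.
Convolutions with zonal kernels commute, so if `f k` is annihilated by a cap kernel of radius `θ k`,
convolving with these kernels one after the other removes the summands of `∑ k, f k` one at a time;
hence every geodesic ball of radius `∑ k, θ k` contains a point where the sum is `≤ 0` and, by
symmetry, one where it is `≥ 0`. Geodesic balls are connected, so there is a zero.

Harmonics of degree `k` are eigenfunctions of the spherical Laplacian `Δ_S`, so Green's identity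
shows that they are annihilated by the zonal kernel `(Δ_S + k (k + d - 2)) φ` for every `C²`
profile `φ`. The choice `φ t = max (t - (1 - (d / k)²)) 0 ^ 3` makes it a cap kernel of radius
`arccos (1 - (d / k)²) ≤ π d / k`.
-/

section

open MeasureTheory Metric Set InnerProductGeometry InnerProductSpace Laplacian Gradient
open scoped RealInnerProductSpace Pointwise Topology

local notation "σ" => Measure.toSphere volume

variable {E : Type*} [NormedAddCommGroup E] [InnerProductSpace ℝ E]

section GeodesicBalls

lemma exists_norm_eq_one_inner_eq_zero (hE : 1 < Module.finrank ℝ E) (x : E) :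
    ∃ u : E, ‖u‖ = 1 ∧ ⟪x, u⟫ = 0 := by
  have hspan : (ℝ ∙ x)ᗮ ≠ ⊥ := fun h => by
    rw [Submodule.orthogonal_eq_bot_iff] at h
    rw [← finrank_top ℝ E, ← h] at hE
    exact hE.not_ge (by simpa using finrank_span_le_card (R := ℝ) {x})
  obtain ⟨w, hw, hw0⟩ := Submodule.exists_mem_ne_zero_of_ne_bot hspan
  refine ⟨‖w‖⁻¹ • w, norm_smul_inv_norm hw0, ?_⟩
  rw [inner_smul_right, Submodule.mem_orthogonal_singleton_iff_inner_right.mp hw, mul_zero]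

lemma exists_eq_cos_angle_smul_add_sin_angle_smul (hE : 1 < Module.finrank ℝ E) {x y : E}
    (hx : ‖x‖ = 1) (hy : ‖y‖ = 1) :
    ∃ u : E, ‖u‖ = 1 ∧ ⟪x, u⟫ = 0 ∧
      y = Real.cos (angle x y) • x + Real.sin (angle x y) • u := by
  have hcos : Real.cos (angle x y) = ⟪x, y⟫ := by simp [cos_angle, hx, hy]
  set w : E := y - ⟪x, y⟫ • x with hw
  have hxw : ⟪x, w⟫ = 0 := by simp [hw, inner_sub_right, inner_smul_right, hx]
  have hw_norm : ‖w‖ = Real.sin (angle x y) := by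
    rw [← sq_eq_sq₀ (norm_nonneg w) (sin_angle_nonneg x y), Real.sin_sq, hcos, hw,
      norm_sub_sq_real, inner_smul_right, norm_smul, hx, hy, real_inner_comm, mul_one,
      Real.norm_eq_abs, sq_abs]
    ring
  rcases eq_or_ne w 0 with hw0 | hw0
  · obtain ⟨u, hu, hxu⟩ := exists_norm_eq_one_inner_eq_zero hE x
    refine ⟨u, hu, hxu, ?_⟩
    rw [← hw_norm, hw0, norm_zero, zero_smul, add_zero, hcos]
    exact sub_eq_zero.mp hw0
  · refine ⟨‖w‖⁻¹ • w, norm_smul_inv_norm hw0, by rw [inner_smul_right, hxw, mul_zero], ?_⟩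
    rw [← hw_norm, smul_inv_smul₀ (norm_ne_zero_iff.mpr hw0), hcos, hw, add_sub_cancel]

lemma norm_cos_smul_add_sin_smul {x u : E} (hx : ‖x‖ = 1) (hu : ‖u‖ = 1) (hxu : ⟪x, u⟫ = 0)
    (s : ℝ) : ‖Real.cos s • x + Real.sin s • u‖ = 1 := by
  rw [← sq_eq_sq₀ (norm_nonneg _) zero_le_one, norm_add_sq_real, inner_smul_left,
    inner_smul_right, hxu, norm_smul, norm_smul, hx, hu]
  simp

lemma angle_cos_smul_add_sin_smul {x u : E} (hx : ‖x‖ = 1) (hu : ‖u‖ = 1) (hxu : ⟪x, u⟫ = 0)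
    {s : ℝ} (hs : s ∈ Icc 0 π) : angle x (Real.cos s • x + Real.sin s • u) = s := by
  rw [angle, norm_cos_smul_add_sin_smul hx hu hxu, hx, inner_add_right, inner_smul_right,
    inner_smul_right, hxu, real_inner_self_eq_norm_sq, hx]
  simpa using Real.arccos_cos hs.1 hs.2

lemma isPreconnected_setOf_angle_le (hE : 1 < Module.finrank ℝ E) (x : sphere (0 : E) 1)
    (θ : ℝ) : IsPreconnected {y : sphere (0 : E) 1 | angle (x : E) y ≤ θ} := by
  have hx : ‖(x : E)‖ = 1 := by simp
  refine isPreconnected_of_forall x fun y hy => ?_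
  obtain ⟨u, hu, hxu, hyu⟩ :=
    exists_eq_cos_angle_smul_add_sin_angle_smul hE hx (norm_eq_of_mem_sphere y)
  let γ : ℝ → sphere (0 : E) 1 := fun s =>
    ⟨Real.cos s • (x : E) + Real.sin s • u,
      mem_sphere_zero_iff_norm.mpr (norm_cos_smul_add_sin_smul hx hu hxu s)⟩
  have hγ : Continuous γ := by fun_prop
  have hα := angle_nonneg (x : E) y
  refine ⟨γ '' Icc 0 (angle (x : E) y), ?_, ⟨0, ⟨le_rfl, hα⟩, ?_⟩,
    ⟨angle (x : E) y, ⟨hα, le_rfl⟩, Subtype.ext hyu.symm⟩,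
    isPreconnected_Icc.image γ hγ.continuousOn⟩
  · rintro _ ⟨s, hs, rfl⟩
    have hs_angle : angle (x : E) (γ s) = s :=
      angle_cos_smul_add_sin_smul hx hu hxu ⟨hs.1, hs.2.trans (angle_le_pi _ _)⟩
    exact (hs_angle.trans_le hs.2).trans hy
  · exact Subtype.ext (by simp [γ])

end GeodesicBalls

section ZonalConvolution

variable [FiniteDimensional ℝ E] [MeasurableSpace E] [BorelSpace E]

lemma measurePreserving_toSphere_linearIsometryEquiv (g : E ≃ₗᵢ[ℝ] E) :
    MeasurePreserving
      (g.toHomeomorph.subtype (fun y => by simp) : sphere (0 : E) 1 ≃ₜ sphere (0 : E) 1) σ σ := by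
  set G : sphere (0 : E) 1 ≃ₜ sphere (0 : E) 1 := g.toHomeomorph.subtype fun y => by simp
  refine ⟨G.continuous.measurable, Measure.ext fun s hs => ?_⟩
  have himage : g '' (Ioo (0 : ℝ) 1 • (Subtype.val '' (G ⁻¹' s))) =
      Ioo (0 : ℝ) 1 • (Subtype.val '' s) := by
    rw [← image2_smul, image_image2_distrib_right (g' := g) (fun t y => map_smul g t y),
      image2_smul, image_image]
    conv_rhs => rw [← image_preimage_eq s G.surjective, image_image]
    rfl
  rw [Measure.map_apply G.continuous.measurable hs,
    Measure.toSphere_apply' _ (G.continuous.measurable hs), Measure.toSphere_apply' _ hs, ← himage,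
    g.image_eq_preimage_symm, g.symm.measurePreserving.measure_preimage_emb
      g.symm.toHomeomorph.measurableEmbedding]

lemma integral_toSphere_comp_linearIsometryEquiv (g : E ≃ₗᵢ[ℝ] E) (F : E → ℝ) :
    ∫ y : sphere (0 : E) 1, F (g y) ∂σ = ∫ y : sphere (0 : E) 1, F y ∂σ :=
  (measurePreserving_toSphere_linearIsometryEquiv g).integral_comp
    (Homeomorph.measurableEmbedding _) fun y : sphere (0 : E) 1 => F y

lemma integrable_toSphere_of_continuous {F : sphere (0 : E) 1 → ℝ} (hF : Continuous F) :
    Integrable F σ :=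
  hF.integrable_of_hasCompactSupport (.of_compactSpace F)

/-- The convolution `x ↦ ∫ K ⟪x, y⟫ f y dσ(y)` of a function on the unit sphere with a zonal kernel,
encoded by its profile `K` as a function of the inner product. -/
noncomputable def zonalConv (K : ℝ → ℝ) (f : sphere (0 : E) 1 → ℝ) (x : sphere (0 : E) 1) : ℝ :=
  ∫ y : sphere (0 : E) 1, K ⟪(x : E), y⟫ * f y ∂σ

lemma continuous_zonalConv {K : ℝ → ℝ} (hK : Continuous K) {f : sphere (0 : E) 1 → ℝ}
    (hf : Continuous f) : Continuous (zonalConv K f) := by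
  simpa using! continuous_parametric_integral_of_continuous (μ := σ)
    (f := fun x y : sphere (0 : E) 1 => K ⟪(x : E), y⟫ * f y) (by fun_prop) isCompact_univ

lemma zonalConv_zero (K : ℝ → ℝ) : zonalConv K (0 : sphere (0 : E) 1 → ℝ) = 0 := by
  ext x
  simp [zonalConv]

lemma zonalConv_neg (K : ℝ → ℝ) (f : sphere (0 : E) 1 → ℝ) :
    zonalConv K (-f) = -zonalConv K f := by
  ext x
  simp [zonalConv, integral_neg]

lemma zonalConv_sum {ι : Type*} {K : ℝ → ℝ} (hK : Continuous K) (S : Finset ι)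
    {f : ι → sphere (0 : E) 1 → ℝ} (hf : ∀ i ∈ S, Continuous (f i)) :
    zonalConv K (∑ i ∈ S, f i) = ∑ i ∈ S, zonalConv K (f i) := by
  ext x
  simp only [zonalConv, Finset.sum_apply, Finset.mul_sum]
  refine integral_finsetSum S fun i hi => ?_
  have := hf i hi
  exact integrable_toSphere_of_continuous (by fun_prop)

lemma zonalConv_zonalConv {K J : ℝ → ℝ} (hK : Continuous K) (hJ : Continuous J)
    {f : sphere (0 : E) 1 → ℝ} (hf : Continuous f) (x : sphere (0 : E) 1) :
    zonalConv K (zonalConv J f) x =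
      ∫ z, (∫ y : sphere (0 : E) 1, K ⟪(x : E), y⟫ * J ⟪(y : E), z⟫ ∂σ) * f z ∂σ := by
  have hint : Integrable (Function.uncurry fun y z : sphere (0 : E) 1 =>
      K ⟪(x : E), y⟫ * J ⟪(y : E), z⟫ * f z) (Measure.prod σ σ) :=
    Continuous.integrable_of_hasCompactSupport (by fun_prop) (.of_compactSpace _)
  simp only [zonalConv, ← integral_const_mul, ← integral_mul_const, ← mul_assoc]
  exact integral_integral_swap hint

/-- The reflection exchanging `x` and `z` preserves the measure. -/
lemma integral_zonal_mul_zonal_comm (K J : ℝ → ℝ) (x z : sphere (0 : E) 1) :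
    ∫ y : sphere (0 : E) 1, K ⟪(x : E), y⟫ * J ⟪(y : E), z⟫ ∂σ =
      ∫ y : sphere (0 : E) 1, J ⟪(x : E), y⟫ * K ⟪(y : E), z⟫ ∂σ := by
  set R : E ≃ₗᵢ[ℝ] E := (ℝ ∙ ((x : E) - z))ᗮ.reflection
  have hRx : R x = z := Submodule.reflection_sub (by simp)
  have hRz : R z = x := by rw [← hRx]; exact Submodule.reflection_reflection _ _
  rw [← integral_toSphere_comp_linearIsometryEquiv R fun y => K ⟪(x : E), y⟫ * J ⟪y, z⟫]
  refine integral_congr_ae (.of_forall fun y => ?_)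
  have hxR : ⟪(x : E), R y⟫ = ⟪(y : E), z⟫ := by rw [← hRz, R.inner_map_map, real_inner_comm]
  have hRz' : ⟪R y, z⟫ = ⟪(x : E), y⟫ := by rw [← hRx, R.inner_map_map, real_inner_comm]
  simp only [hxR, hRz', mul_comm]

lemma zonalConv_comm {K J : ℝ → ℝ} (hK : Continuous K) (hJ : Continuous J)
    {f : sphere (0 : E) 1 → ℝ} (hf : Continuous f) :
    zonalConv K (zonalConv J f) = zonalConv J (zonalConv K f) := by
  ext x
  simp only [zonalConv_zonalConv hK hJ hf, zonalConv_zonalConv hJ hK hf,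
    integral_zonal_mul_zonal_comm K J x]

end ZonalConvolution

section CapKernels

/-- `K` is the profile of a nonnegative zonal kernel which is positive at its pole and supported in
the geodesic ball of radius `θ` about it. Sign and support only concern `[-1, 1]`, where inner
products of unit vectors lie. -/
structure IsCapKernel (K : ℝ → ℝ) (θ : ℝ) : Prop where
  continuous : Continuous K
  nonneg : ∀ t ∈ Icc (-1) 1, 0 ≤ K t
  one_pos : 0 < K 1
  arccos_le : ∀ t ∈ Icc (-1) 1, K t ≠ 0 → Real.arccos t ≤ θ

variable [FiniteDimensional ℝ E] [MeasurableSpace E] [BorelSpace E]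

lemma IsCapKernel.exists_nonpos {K : ℝ → ℝ} {θ : ℝ} (hK : IsCapKernel K θ)
    {f : sphere (0 : E) 1 → ℝ} (hf : Continuous f) {x : sphere (0 : E) 1}
    (hx : zonalConv K f x ≤ 0) :
    ∃ y : sphere (0 : E) 1, angle (x : E) y ≤ θ ∧ f y ≤ 0 := by
  by_contra! hpos
  have hK_cont := hK.continuous
  have hangle_self : angle (x : E) x ≤ θ := by
    simpa [angle_self (ne_zero_of_mem_unit_sphere x)]
      using hK.arccos_le 1 (by simp) hK.one_pos.ne'
  refine hx.not_gt (Continuous.integral_pos_of_hasCompactSupport_nonneg_nonzero (x := x)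
    (by fun_prop) (.of_compactSpace _) (fun y => ?_) ?_)
  · have hxy : ⟪(x : E), y⟫ ∈ Icc (-1) 1 :=
      real_inner_mem_Icc_of_norm_eq_one (by simp) (by simp)
    rcases eq_or_ne (K ⟪(x : E), y⟫) 0 with h0 | h0
    · simp [h0]
    · have hangle : angle (x : E) y ≤ θ := by simpa [angle] using hK.arccos_le _ hxy h0
      exact mul_nonneg (hK.nonneg _ hxy) (hpos y hangle).le
  · simpa using And.intro hK.one_pos.ne' (hpos x hangle_self).ne'

theorem exists_sum_nonpos_of_zonalConv_eq_zero {ι : Type*} {S : Finset ι} {K : ι → ℝ → ℝ}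
    {θ : ι → ℝ} {f : ι → sphere (0 : E) 1 → ℝ} (hK : ∀ i ∈ S, IsCapKernel (K i) (θ i))
    (hf : ∀ i ∈ S, Continuous (f i)) (hKf : ∀ i ∈ S, zonalConv (K i) (f i) = 0)
    (x : sphere (0 : E) 1) :
    ∃ y : sphere (0 : E) 1, angle (x : E) y ≤ ∑ i ∈ S, θ i ∧ (∑ i ∈ S, f i) y ≤ 0 := by
  classical
  induction S using Finset.induction_on generalizing f with
  | empty => exact ⟨x, by simp [angle_self (ne_zero_of_mem_unit_sphere x)]⟩
  | insert i S hiS ih =>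
    have hcont_sum : Continuous (∑ j ∈ insert i S, f j) := by
      rw [Finset.sum_fn]; exact continuous_finsetSum _ hf
    have hconv_sum := zonalConv_sum (hK i (Finset.mem_insert_self i S)).continuous _ hf
    rw [Finset.forall_mem_insert] at hK hf hKf
    obtain ⟨hKi, hK⟩ := hK
    obtain ⟨-, hf⟩ := hf
    obtain ⟨hKfi, hKf⟩ := hKf
    obtain ⟨y, hxy, hy⟩ := ih (f := fun j => zonalConv (K i) (f j)) hK
      (fun j hj => continuous_zonalConv hKi.continuous (hf j hj)) fun j hj => by
        rw [zonalConv_comm (hK j hj).continuous hKi.continuous (hf j hj), hKf j hj,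
          zonalConv_zero]
    have hconv : zonalConv (K i) (∑ j ∈ insert i S, f j) y ≤ 0 := by
      rwa [hconv_sum, Finset.sum_insert hiS, hKfi, zero_add]
    obtain ⟨z, hyz, hz⟩ := hKi.exists_nonpos hcont_sum hconv
    refine ⟨z, ?_, hz⟩
    rw [Finset.sum_insert hiS, add_comm]
    exact (angle_le_angle_add_angle _ _ _).trans (add_le_add hxy hyz)

theorem exists_sum_eq_zero_of_zonalConv_eq_zero (hE : 1 < Module.finrank ℝ E) {ι : Type*}
    {S : Finset ι} {K : ι → ℝ → ℝ} {θ : ι → ℝ} {f : ι → sphere (0 : E) 1 → ℝ}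
    (hK : ∀ i ∈ S, IsCapKernel (K i) (θ i)) (hf : ∀ i ∈ S, Continuous (f i))
    (hKf : ∀ i ∈ S, zonalConv (K i) (f i) = 0) (x : sphere (0 : E) 1) :
    ∃ y : sphere (0 : E) 1, angle (x : E) y ≤ ∑ i ∈ S, θ i ∧ (∑ i ∈ S, f i) y = 0 := by
  obtain ⟨y, hxy, hy⟩ := exists_sum_nonpos_of_zonalConv_eq_zero hK hf hKf x
  obtain ⟨z, hxz, hz⟩ := exists_sum_nonpos_of_zonalConv_eq_zero (f := fun i => -f i) hK
    (fun i hi => (hf i hi).neg) (fun i hi => by rw [zonalConv_neg, hKf i hi, neg_zero]) x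
  have hcont : Continuous (∑ i ∈ S, f i) := by rw [Finset.sum_fn]; exact continuous_finsetSum _ hf
  rw [Finset.sum_neg_distrib, Pi.neg_apply, neg_nonpos] at hz
  exact (isPreconnected_setOf_angle_le hE x _).intermediate_value hxy hxz hcont.continuousOn
    ⟨hy, hz⟩

end CapKernels

section DivergenceTheorem

lemma fderiv_inner_mul_inner {W : E → E} {y : E} (hW : DifferentiableAt ℝ W y) (u v w : E) :
    fderiv ℝ (fun z => ⟪u, z⟫ * ⟪v, W z⟫) y w =
      ⟪u, w⟫ * ⟪v, W y⟫ + ⟪u, y⟫ * ⟪v, fderiv ℝ W y w⟫ := by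
  have hu : HasFDerivAt (fun z => ⟪u, z⟫) (innerSL ℝ u) y := (innerSL ℝ u).hasFDerivAt
  have hv : HasFDerivAt (fun z => ⟪v, W z⟫) (innerSL ℝ v ∘L fderiv ℝ W y) y :=
    (innerSL ℝ v).hasFDerivAt.comp y hW.hasFDerivAt
  rw [HasFDerivAt.fderiv (hu.fun_mul hv)]
  simp [add_comm, mul_comm]

/-- The infinitesimal rotation `y ↦ ⟪u, y⟫ v - ⟪v, y⟫ u` in the plane of `u` and `v`. -/
noncomputable def planeRotationGenerator (u v : E) : E →L[ℝ] E := rankOne ℝ v u - rankOne ℝ u v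

lemma sum_planeRotationGenerator {ι : Type*} [Fintype ι] (b : OrthonormalBasis ι ℝ E)
    (L : E →L[ℝ] E) (w y : E) :
    ∑ i, ∑ j, (⟪b i, planeRotationGenerator (b i) (b j) y⟫ * ⟪b j, w⟫ +
        ⟪b i, y⟫ * ⟪b j, L (planeRotationGenerator (b i) (b j) y)⟫) =
      ‖y‖ ^ 2 * LinearMap.trace ℝ E L - ⟪L y, y⟫ - (Module.finrank ℝ E - 1) * ⟪w, y⟫ := by
  classical
  have hparseval (v : E) : ∑ j, ⟪b j, y⟫ * ⟪b j, v⟫ = ⟪v, y⟫ := by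
    simp only [← b.sum_inner_mul_inner v y, real_inner_comm, mul_comm]
  have hL (j : ι) : ∑ i, ⟪b i, y⟫ * ⟪b j, L (b i)⟫ = ⟪b j, L y⟫ := by
    conv_rhs => rw [← b.sum_repr' y, map_sum, inner_sum]
    simp only [map_smul, inner_smul_right]
  have hyLy : ∑ i, ∑ j, ⟪b i, y⟫ * (⟪b j, y⟫ * ⟪b j, L (b i)⟫) = ⟪L y, y⟫ := by
    rw [Finset.sum_comm]
    simp only [mul_left_comm ⟪b _, y⟫ ⟪b _, y⟫, ← Finset.mul_sum, hL, hparseval]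
  have htrace : ∑ i, ∑ j, ⟪b i, y⟫ * (⟪b i, y⟫ * ⟪b j, L (b j)⟫) =
      ‖y‖ ^ 2 * LinearMap.trace ℝ E L := by
    rw [(L : E →ₗ[ℝ] E).trace_eq_sum_inner b, ← b.sum_sq_inner_right y, Finset.sum_mul_sum]
    simp only [sq, mul_assoc, ContinuousLinearMap.coe_coe]
  have hcard : (Fintype.card ι : ℝ) = Module.finrank ℝ E := by
    rw [Module.finrank_eq_card_basis b.toBasis]
  simp only [planeRotationGenerator, sub_apply, rankOne_apply, map_sub, map_smul,
    inner_sub_right, inner_smul_right, orthonormal_iff_ite.mp b.orthonormal]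
  simp only [sub_mul, mul_sub, Finset.sum_add_distrib, Finset.sum_sub_distrib, hyLy, htrace]
  simp only [mul_ite, ite_mul, mul_one, one_mul, mul_zero, zero_mul, Finset.sum_ite_eq,
    Finset.mem_univ, ↓reduceIte, Finset.sum_const, Finset.card_univ, nsmul_eq_mul, hparseval, hcard]
  ring

lemma planeRotationGenerator_mem_skewAdjoint [CompleteSpace E] (u v : E) :
    planeRotationGenerator u v ∈ skewAdjoint (E →L[ℝ] E) := by
  simp [skewAdjoint.mem_iff, planeRotationGenerator, ContinuousLinearMap.star_eq_adjoint]

variable [FiniteDimensional ℝ E] [MeasurableSpace E] [BorelSpace E]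

theorem integral_toSphere_fderiv_apply_eq_zero {A : E →L[ℝ] E}
    (hA : A ∈ skewAdjoint (E →L[ℝ] E)) {F : E → ℝ} (hF : ContDiff ℝ 1 F) :
    ∫ y : sphere (0 : E) 1, fderiv ℝ F y (A y) ∂σ = 0 := by
  have hexp (s : ℝ) : NormedSpace.exp (s • A) ∈ unitary (E →L[ℝ] E) :=
    let +nondep : NormedAlgebra ℚ (E →L[ℝ] E) := .restrictScalars ℚ ℝ _
    NormedSpace.exp_mem_unitary_of_mem_skewAdjoint (skewAdjoint.smul_mem s hA)
  let g (s : ℝ) : E ≃ₗᵢ[ℝ] E := Unitary.linearIsometryEquiv ⟨_, hexp s⟩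
  have hg_apply (s : ℝ) (y : E) : g s y = NormedSpace.exp (s • A) y := rfl
  have hg (s : ℝ) (y : E) : HasDerivAt (fun s => g s y) (A (g s y)) s := by
    simpa using! (hasDerivAt_exp_smul_const' A s).clm_apply (hasDerivAt_const s y)
  have hF' : Continuous fun y => fderiv ℝ F y (A y) :=
    (hF.continuous_fderiv one_ne_zero).clm_apply A.continuous
  obtain ⟨C, hC⟩ := (isCompact_sphere (0 : E) 1).exists_bound_of_continuousOn hF'.continuousOn
  have hderiv := (hasDerivAt_integral_of_dominated_loc_of_deriv_le (μ := Measure.toSphere volume)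
    (F := fun s (y : sphere (0 : E) 1) => F (g s y))
    (F' := fun s (y : sphere (0 : E) 1) => fderiv ℝ F (g s y) (A (g s y)))
    (bound := fun _ => C) (x₀ := 0) (s := univ) Filter.univ_mem
    (.of_forall fun s => (integrable_toSphere_of_continuous (by fun_prop)).aestronglyMeasurable)
    (integrable_toSphere_of_continuous (by fun_prop))
    (integrable_toSphere_of_continuous (by fun_prop)).aestronglyMeasurable
    (.of_forall fun y s _ => hC _ (by simp))
    (integrable_const C)
    (.of_forall fun y s _ =>
      (hF.differentiable one_ne_zero _).hasFDerivAt.comp_hasDerivAt s (hg s y))).2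
  simp only [integral_toSphere_comp_linearIsometryEquiv (g _) F] at hderiv
  have hg0 (y : E) : g 0 y = y := by simp [hg_apply]
  simpa only [hg0] using hderiv.unique (hasDerivAt_const _ _)

theorem integral_toSphere_divergence_eq_zero {W : E → E} (hW : ContDiff ℝ 1 W) :
    ∫ y : sphere (0 : E) 1, (LinearMap.trace ℝ E (fderiv ℝ W y) -
      ⟪fderiv ℝ W y y, y⟫ - (Module.finrank ℝ E - 1) * ⟪W y, (y : E)⟫) ∂σ = 0 := by
  set b := stdOrthonormalBasis ℝ E
  have hW_diff : Differentiable ℝ W := hW.differentiable one_ne_zero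
  have hsum (y : sphere (0 : E) 1) := sum_planeRotationGenerator b (fderiv ℝ W y) (W y) y
  simp only [norm_eq_of_mem_sphere, one_pow, one_mul] at hsum
  simp only [← hsum, ← fderiv_inner_mul_inner (hW_diff _)]
  have hcont (i j : Fin (Module.finrank ℝ E)) :
      ContDiff ℝ 1 fun z => ⟪b i, z⟫ * ⟪b j, W z⟫ :=
    (contDiff_const.inner ℝ contDiff_id).mul (contDiff_const.inner ℝ hW)
  have hint (i j : Fin (Module.finrank ℝ E)) := integrable_toSphere_of_continuous <|
    (((hcont i j).continuous_fderiv one_ne_zero).clm_apply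
      (planeRotationGenerator (b i) (b j)).continuous).comp continuous_subtype_val
  simp only [Function.comp_def] at hint
  rw [integral_finsetSum _ fun i _ => integrable_finsetSum _ fun j _ => hint i j]
  refine Finset.sum_eq_zero fun i _ => ?_
  rw [integral_finsetSum _ fun j _ => hint i j]
  exact Finset.sum_eq_zero fun j _ => integral_toSphere_fderiv_apply_eq_zero
    (planeRotationGenerator_mem_skewAdjoint _ _) (hcont i j)

end DivergenceTheorem

section Gradient

variable [CompleteSpace E]

lemma contDiff_gradient {f : E → ℝ} (hf : ContDiff ℝ 2 f) : ContDiff ℝ 1 (∇ f) :=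
  (toDual ℝ E).symm.contDiff.comp (hf.fderiv_right one_add_one_eq_two.le)

lemma inner_fderiv_gradient {f : E → ℝ} (hf : ContDiff ℝ 2 f) (y v w : E) :
    ⟪fderiv ℝ (∇ f) y v, w⟫ = fderiv ℝ (fderiv ℝ f) y v w := by
  have hf' : DifferentiableAt ℝ (fderiv ℝ f) y :=
    (hf.fderiv_right one_add_one_eq_two.le).differentiable one_ne_zero y
  have : HasFDerivAt (∇ f) _ y :=
    (toDual ℝ E).symm.toContinuousLinearEquiv.hasFDerivAt.comp y hf'.hasFDerivAt
  rw [this.fderiv]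
  exact toDual_symm_apply

/-- Green's vector field `f ∇g - g ∇f` for the zonal function `g y = φ ⟪x, y⟫`. -/
noncomputable def zonalGreenField (φ : ℝ → ℝ) (x : E) (f : E → ℝ) (y : E) : E :=
  (f y * deriv φ ⟪x, y⟫) • x - φ ⟪x, y⟫ • ∇ f y

variable {φ : ℝ → ℝ} {f : E → ℝ}

lemma contDiff_zonalGreenField (hφ : ContDiff ℝ 2 φ) (hf : ContDiff ℝ 2 f) (x : E) :
    ContDiff ℝ 1 (zonalGreenField φ x f) := by
  have hφ' : ContDiff ℝ 1 (deriv φ) := hφ.deriv'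
  have hgrad := contDiff_gradient hf
  have hf1 : ContDiff ℝ 1 f := hf.of_le one_le_two
  have hφ1 : ContDiff ℝ 1 φ := hφ.of_le one_le_two
  have hx : ContDiff ℝ 1 fun y => ⟪x, y⟫ := contDiff_const.inner ℝ contDiff_id
  exact ((hf1.mul (hφ'.comp hx)).smul contDiff_const).sub ((hφ1.comp hx).smul hgrad)

lemma fderiv_zonalGreenField (hφ : ContDiff ℝ 2 φ) (hf : ContDiff ℝ 2 f) (x y : E) :
    fderiv ℝ (zonalGreenField φ x f) y =
      rankOne ℝ x ((f y * deriv (deriv φ) ⟪x, y⟫) • x + deriv φ ⟪x, y⟫ • ∇ f y) -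
        deriv φ ⟪x, y⟫ • rankOne ℝ (∇ f y) x - φ ⟪x, y⟫ • fderiv ℝ (∇ f) y := by
  have hφ' : ContDiff ℝ 1 (deriv φ) := hφ.deriv'
  have hgrad := ((contDiff_gradient hf).differentiable one_ne_zero y).hasFDerivAt
  have hf1 := (hf.differentiable two_ne_zero y).hasFDerivAt
  have hx : HasFDerivAt (fun y => ⟪x, y⟫) (innerSL ℝ x) y := (innerSL ℝ x).hasFDerivAt
  have hφx := (hφ.differentiable two_ne_zero ⟪x, y⟫).hasDerivAt.comp_hasFDerivAt y hx
  have hφ'x := (hφ'.differentiable one_ne_zero ⟪x, y⟫).hasDerivAt.comp_hasFDerivAt y hx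
  have hfield := ((hf1.fun_mul hφ'x).smul_const x).fun_sub (hφx.fun_smul hgrad)
  refine HasFDerivAt.fderiv (hfield.congr_fderiv ?_)
  ext w
  simp only [Function.comp_apply, sub_apply, add_apply, smul_apply, smul_eq_mul, map_add, map_smul,
    ContinuousLinearMap.smulRight_apply, coe_innerSL_apply, rankOne_apply, inner_gradient_left]
  module

end Gradient

section SolidHarmonics

variable [FiniteDimensional ℝ E]

lemma trace_fderiv_gradient {f : E → ℝ} (hf : ContDiff ℝ 2 f) (y : E) :
    LinearMap.trace ℝ E (fderiv ℝ (∇ f) y) = Δ f y := by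
  rw [laplacian_eq_iteratedFDeriv_stdOrthonormalBasis,
    LinearMap.trace_eq_sum_inner _ (stdOrthonormalBasis ℝ E)]
  simp only [iteratedFDeriv_two_apply, ContinuousLinearMap.coe_coe, ← inner_fderiv_gradient hf,
    real_inner_comm, Matrix.cons_val_zero, Matrix.cons_val_one]

/-- Solid harmonics of degree `k`: harmonic functions homogeneous of degree `k`, the homogeneity
being encoded by Euler's identity. -/
structure IsSolidHarmonic (k : ℕ) (f : E → ℝ) : Prop where
  harmonicOnNhd : HarmonicOnNhd f univ
  fderiv_apply_self : ∀ y, fderiv ℝ f y y = k * f y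

namespace IsSolidHarmonic

variable {k : ℕ} {f : E → ℝ}

lemma contDiff (hf : IsSolidHarmonic k f) : ContDiff ℝ 2 f :=
  contDiffOn_univ.mp hf.harmonicOnNhd.contDiffOn

lemma fderiv_fderiv_apply_self (hf : IsSolidHarmonic k f) (y : E) :
    fderiv ℝ (fderiv ℝ f) y y y = k * (k - 1) * f y := by
  have hf' : HasFDerivAt (fderiv ℝ f) (fderiv ℝ (fderiv ℝ f) y) y :=
    ((hf.contDiff.fderiv_right one_add_one_eq_two.le).differentiable one_ne_zero y).hasFDerivAt
  have heuler : HasFDerivAt (fun z => fderiv ℝ f z z) ((k : ℝ) • fderiv ℝ f y) y := by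
    simpa only [hf.fderiv_apply_self] using
      (hf.contDiff.differentiable two_ne_zero y).hasFDerivAt.const_mul (k : ℝ)
  have hy := DFunLike.congr_fun ((hf'.clm_apply (hasFDerivAt_id y)).unique heuler) y
  simp only [add_apply, ContinuousLinearMap.comp_apply, ContinuousLinearMap.flip_apply, smul_apply,
    ContinuousLinearMap.id_apply, id_eq, hf.fderiv_apply_self, smul_eq_mul] at hy
  linear_combination hy

lemma const_mul (hf : IsSolidHarmonic k f) (c : ℝ) :
    IsSolidHarmonic k fun y => c * f y where
  harmonicOnNhd := hf.harmonicOnNhd.const_smul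
  fderiv_apply_self y := by
    rw [fderiv_const_mul (hf.contDiff.differentiable two_ne_zero y), smul_apply,
      hf.fderiv_apply_self, smul_eq_mul]
    ring

end IsSolidHarmonic

/-- The Gegenbauer differential operator: the profile of `Δ_S g + k (k + d - 2) g`, where `Δ_S` is
the spherical Laplacian on the unit sphere of a `d`-dimensional space and `g y = φ ⟪x, y⟫`. -/
noncomputable def gegenbauerOp (d k : ℕ) (φ : ℝ → ℝ) (t : ℝ) : ℝ :=
  (1 - t ^ 2) * deriv (deriv φ) t - (d - 1) * t * deriv φ t + k * (k + d - 2) * φ t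

variable {φ : ℝ → ℝ} {f : E → ℝ}

lemma IsSolidHarmonic.divergence_zonalGreenField {k : ℕ} (hf : IsSolidHarmonic k f)
    (hφ : ContDiff ℝ 2 φ) {x y : E} (hx : ‖x‖ = 1) :
    LinearMap.trace ℝ E (fderiv ℝ (zonalGreenField φ x f) y) -
        ⟪fderiv ℝ (zonalGreenField φ x f) y y, y⟫ -
        (Module.finrank ℝ E - 1) * ⟪zonalGreenField φ x f y, y⟫ =
      gegenbauerOp (Module.finrank ℝ E) k φ ⟪x, y⟫ * f y := by
  have htrace : LinearMap.trace ℝ E (fderiv ℝ (∇ f) y) = 0 := by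
    rw [trace_fderiv_gradient hf.contDiff]
    exact (hf.harmonicOnNhd y (mem_univ y)).2.self_of_nhds
  have hgrad : ⟪∇ f y, y⟫ = k * f y := by
    rw [inner_gradient_left, hf.fderiv_apply_self]
  have hhess : ⟪fderiv ℝ (∇ f) y y, y⟫ = k * (k - 1) * f y := by
    rw [inner_fderiv_gradient hf.contDiff, hf.fderiv_fderiv_apply_self]
  have htrace_W : LinearMap.trace ℝ E (fderiv ℝ (zonalGreenField φ x f) y) =
      f y * deriv (deriv φ) ⟪x, y⟫ := by
    simp [fderiv_zonalGreenField hφ hf.contDiff, trace_rankOne, htrace,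
      inner_gradient_left, inner_gradient_right, hx]
  have hinner_W : ⟪fderiv ℝ (zonalGreenField φ x f) y y, y⟫ =
      (f y * deriv (deriv φ) ⟪x, y⟫) * ⟪x, y⟫ ^ 2 - φ ⟪x, y⟫ * (k * (k - 1) * f y) := by
    simp only [fderiv_zonalGreenField hφ hf.contDiff, sub_apply, smul_apply, rankOne_apply,
      inner_add_left, inner_sub_left, real_inner_smul_left, hgrad, hhess]
    ring
  have hinner : ⟪zonalGreenField φ x f y, y⟫ =
      f y * deriv φ ⟪x, y⟫ * ⟪x, y⟫ - φ ⟪x, y⟫ * (k * f y) := by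
    simp only [zonalGreenField, inner_sub_left, real_inner_smul_left, hgrad]
  rw [htrace_W, hinner_W, hinner, gegenbauerOp]
  ring

variable [MeasurableSpace E] [BorelSpace E]

theorem IsSolidHarmonic.zonalConv_gegenbauerOp {k : ℕ} (hf : IsSolidHarmonic k f)
    (hφ : ContDiff ℝ 2 φ) :
    zonalConv (gegenbauerOp (Module.finrank ℝ E) k φ) (fun y : sphere (0 : E) 1 => f y) = 0 := by
  ext x
  simp only [zonalConv, ← hf.divergence_zonalGreenField hφ (norm_eq_of_mem_sphere x)]
  exact integral_toSphere_divergence_eq_zero (contDiff_zonalGreenField hφ hf.contDiff (x : E))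

end SolidHarmonics

section GegenbauerKernel

lemma hasDerivAt_max_zero_pow (n : ℕ) (t : ℝ) :
    HasDerivAt (fun t : ℝ => max t 0 ^ (n + 2)) ((n + 2) * max t 0 ^ (n + 1)) t := by
  have hpow (t : ℝ) : HasDerivAt (fun t : ℝ => t ^ (n + 2)) ((n + 2) * t ^ (n + 1)) t := by
    simpa using hasDerivAt_pow (n + 2) t
  rcases lt_trichotomy t 0 with ht | rfl | ht
  · have hzero : (fun t : ℝ => max t 0 ^ (n + 2)) =ᶠ[𝓝 t] fun _ => 0 := by
      filter_upwards [Iio_mem_nhds ht] with s hs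
      simp [max_eq_right (mem_Iio.mp hs).le]
    simpa [max_eq_right ht.le] using (hasDerivAt_const t (0 : ℝ)).congr_of_eventuallyEq hzero
  · rw [← hasDerivWithinAt_univ, ← Iic_union_Ici (a := (0 : ℝ)), max_self]
    refine HasDerivWithinAt.union ?_ ((hpow 0).hasDerivWithinAt.congr (fun s hs => ?_) (by simp))
    · simpa using (hasDerivWithinAt_const (0 : ℝ) (Iic 0) (0 : ℝ)).congr
        (f₁ := fun t : ℝ => max t 0 ^ (n + 2)) (fun s hs => by simp [max_eq_right (mem_Iic.mp hs)])
        (by simp)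
    · rw [max_eq_left (mem_Ici.mp hs)]
  · have hself : (fun t : ℝ => max t 0 ^ (n + 2)) =ᶠ[𝓝 t] fun t => t ^ (n + 2) := by
      filter_upwards [Ioi_mem_nhds ht] with s hs
      rw [max_eq_left (mem_Ioi.mp hs).le]
    simpa only [max_eq_left ht.le] using (hpow t).congr_of_eventuallyEq hself

lemma deriv_max_sub_zero_pow (n : ℕ) (a : ℝ) :
    deriv (fun t : ℝ => max (t - a) 0 ^ (n + 2)) = fun t => (n + 2) * max (t - a) 0 ^ (n + 1) :=
  funext fun t => ((hasDerivAt_max_zero_pow n (t - a)).comp_sub_const t a).deriv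

lemma contDiff_max_sub_zero_pow (n : ℕ) (a : ℝ) :
    ContDiff ℝ n fun t : ℝ => max (t - a) 0 ^ (n + 1) := by
  induction n with
  | zero => exact contDiff_zero.mpr (by fun_prop)
  | succ n ih =>
    push_cast
    refine contDiff_succ_iff_deriv.mpr ⟨fun t =>
      ((hasDerivAt_max_zero_pow n (t - a)).comp_sub_const t a).differentiableAt, by simp, ?_⟩
    rw [deriv_max_sub_zero_pow]
    exact contDiff_const.mul ih

lemma gegenbauerOp_max_sub_zero_pow_three (d k : ℕ) (a t : ℝ) :
    gegenbauerOp d k (fun t => max (t - a) 0 ^ 3) t =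
      6 * (1 - t ^ 2) * max (t - a) 0 - 3 * (d - 1) * t * max (t - a) 0 ^ 2 +
        k * (k + d - 2) * max (t - a) 0 ^ 3 := by
  have hcube : deriv (fun t => max (t - a) 0 ^ 3) = fun t => 3 * max (t - a) 0 ^ 2 :=
    (deriv_max_sub_zero_pow 1 a).trans (by norm_num)
  have hsquare : deriv (fun t => max (t - a) 0 ^ 2) = fun t => 2 * max (t - a) 0 :=
    (deriv_max_sub_zero_pow 0 a).trans (by simp)
  rw [gegenbauerOp, hcube, deriv_const_mul_field, hsquare]
  ring

lemma gegenbauer_cubic_pos {d k : ℝ} (hd : 2 ≤ d) (hk : 0 < k) {t v : ℝ} (hv : 0 < v)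
    (ht : t = 1 - (d / k) ^ 2 + v) (ht' : t ∈ Icc (-1) 1) :
    0 < 6 * (1 - t ^ 2) * v - 3 * (d - 1) * t * v ^ 2 + k * (k + d - 2) * v ^ 3 := by
  obtain ⟨ht_neg, ht_one⟩ := ht'
  suffices h : 0 < 6 * (1 - t ^ 2) - 3 * (d - 1) * (t * v) + k * (k + d - 2) * v ^ 2 by
    nlinarith [mul_pos h hv]
  have hcoeff : k ^ 2 * v ^ 2 ≤ k * (k + d - 2) * v ^ 2 := by gcongr; nlinarith
  have hkv : 0 < k ^ 2 * v ^ 2 := by positivity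
  -- The middle term is negative only for `t > 0`, where `1 - t ^ 2 ≥ 1 - t = (d / k) ^ 2 - v`.
  rcases le_or_gt t 0 with ht0 | ht0
  · have htv : 0 ≤ -t * v := mul_nonneg (neg_nonneg.mpr ht0) hv.le
    nlinarith [mul_nonneg (sub_nonneg.mpr (one_le_two.trans hd)) htv]
  · set q := d / k
    have hq : q * k = d := div_mul_cancel₀ d hk.ne'
    have hone_sub_sq : q ^ 2 - v ≤ 1 - t ^ 2 := by nlinarith
    have hmiddle : (d - 1) * (t * v) ≤ (d - 1) * v := by
      nlinarith [mul_nonneg (sub_nonneg.mpr ht_one) hv.le]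
    have hquad : 0 < 6 * q ^ 2 - 3 * (d + 1) * v + k ^ 2 * v ^ 2 := by
      nlinarith [sq_nonneg (k * v - 9 / 4 * q)]
    linarith

lemma isCapKernel_gegenbauerOp {d k : ℕ} (hd : 2 ≤ d) (hk : 0 < k) :
    IsCapKernel (gegenbauerOp d k fun t => max (t - (1 - (d / k) ^ 2)) 0 ^ 3)
      (Real.arccos (1 - (d / k) ^ 2)) := by
  have hd' : (2 : ℝ) ≤ d := by exact_mod_cast hd
  have hk' : (0 : ℝ) < k := by exact_mod_cast hk
  set a : ℝ := 1 - (d / k) ^ 2 with ha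
  have hpos {t : ℝ} (ht : t ∈ Icc (-1) 1) (hat : a < t) :
      0 < gegenbauerOp d k (fun t => max (t - a) 0 ^ 3) t := by
    rw [gegenbauerOp_max_sub_zero_pow_three, max_eq_left (sub_pos.mpr hat).le]
    exact gegenbauer_cubic_pos hd' hk' (sub_pos.mpr hat) (by rw [← ha]; ring) ht
  have hzero {t : ℝ} (hat : t ≤ a) : gegenbauerOp d k (fun t => max (t - a) 0 ^ 3) t = 0 := by
    simp [gegenbauerOp_max_sub_zero_pow_three, max_eq_right (sub_nonpos.mpr hat)]
  refine ⟨?_, fun t ht => ?_, hpos (by simp) ?_, fun t _ hne => ?_⟩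
  · simp only [funext (gegenbauerOp_max_sub_zero_pow_three d k a)]
    fun_prop
  · rcases le_or_gt t a with hat | hat
    · exact (hzero hat).ge
    · exact (hpos ht hat).le
  · exact sub_lt_self 1 (by positivity)
  · exact Real.arccos_le_arccos (not_le.mp (mt hzero hne)).le

lemma arccos_one_sub_sq_le {q : ℝ} (hq : 0 ≤ q) : Real.arccos (1 - q ^ 2) ≤ π * q := by
  rcases le_total 1 q with hq1 | hq1
  · exact (Real.arccos_le_pi _).trans (le_mul_of_one_le_right Real.pi_nonneg hq1)
  · have hπq : π * q ≤ π := mul_le_of_le_one_right Real.pi_nonneg hq1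
    have hcos : Real.cos (π * q) ≤ 1 - q ^ 2 := calc
      Real.cos (π * q) ≤ 1 - 2 / π ^ 2 * (π * q) ^ 2 :=
        Real.cos_le_one_sub_mul_cos_sq (by rwa [abs_of_nonneg (by positivity)])
      _ = 1 - 2 * q ^ 2 := by field_simp
      _ ≤ 1 - q ^ 2 := by linarith [sq_nonneg q]
    calc Real.arccos (1 - q ^ 2) ≤ Real.arccos (Real.cos (π * q)) := Real.arccos_le_arccos hcos
      _ = π * q := Real.arccos_cos (by positivity) hπq

end GegenbauerKernel

theorem poly_restriction_zero_in_geodesic_ball_general [FiniteDimensional ℝ E]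
    (hE : 1 < Module.finrank ℝ E) {S : Finset ℕ} (hS : ∀ k ∈ S, 0 < k) {f : ℕ → E → ℝ}
    (hf : ∀ k ∈ S, IsSolidHarmonic k (f k)) {x : E} (hx : ‖x‖ = 1) :
    ∃ y : E, ‖y‖ = 1 ∧ angle x y ≤ π * Module.finrank ℝ E * ∑ k ∈ S, 1 / (k : ℝ) ∧
      ∑ k ∈ S, f k y = 0 := by
  let : MeasurableSpace E := borel E
  have : BorelSpace E := ⟨rfl⟩
  have hcont (k : ℕ) (hk : k ∈ S) : Continuous fun y : sphere (0 : E) 1 => f k y :=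
    (hf k hk).contDiff.continuous.comp continuous_subtype_val
  obtain ⟨y, hxy, hy⟩ := exists_sum_eq_zero_of_zonalConv_eq_zero hE
    (fun k hk => isCapKernel_gegenbauerOp hE (hS k hk)) hcont
    (fun k hk => (hf k hk).zonalConv_gegenbauerOp (contDiff_max_sub_zero_pow 2 _))
    ⟨x, mem_sphere_zero_iff_norm.mpr hx⟩
  refine ⟨y, norm_eq_of_mem_sphere y, hxy.trans ?_, by simpa only [Finset.sum_apply] using hy⟩
  rw [Finset.mul_sum]
  exact Finset.sum_le_sum fun k _ => (arccos_one_sub_sq_le (by positivity)).trans_eq (by ring)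

section EuclideanSpace

variable {ι : Type*} [Fintype ι]

lemma arccos_sum_mul_eq_angle {x y : EuclideanSpace ℝ ι} (hx : ‖x‖ = 1) (hy : ‖y‖ = 1) :
    Real.arccos (∑ i, x i * y i) = angle x y := by
  simp [angle, hx, hy, PiLp.inner_apply, mul_comm]

lemma contDiff_eval_euclideanSpace (p : MvPolynomial ι ℝ) {n : WithTop ℕ∞} :
    ContDiff ℝ n fun y : EuclideanSpace ℝ ι => MvPolynomial.eval (fun i => y i) p := by
  induction p using MvPolynomial.induction_on with
  | C a => simpa using contDiff_const
  | add p q hp hq => simpa using hp.add hq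
  | mul_X p i hp => simpa using hp.mul (EuclideanSpace.proj i).contDiff

lemma hasFDerivAt_eval_euclideanSpace (p : MvPolynomial ι ℝ) (y : EuclideanSpace ℝ ι) :
    HasFDerivAt (fun y : EuclideanSpace ℝ ι => MvPolynomial.eval (fun i => y i) p)
      (∑ i, MvPolynomial.eval (fun i => y i) (MvPolynomial.pderiv i p) •
        (EuclideanSpace.proj i : EuclideanSpace ℝ ι →L[ℝ] ℝ)) y := by
  classical
  induction p using MvPolynomial.induction_on with
  | C a => simpa using hasFDerivAt_const a y
  | add p q hp hq => simpa [add_smul, Finset.sum_add_distrib] using hp.fun_add hq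
  | mul_X p j hp =>
    have hX : HasFDerivAt (fun y : EuclideanSpace ℝ ι => y j)
        (EuclideanSpace.proj j : _ →L[ℝ] ℝ) y :=
      (EuclideanSpace.proj j : EuclideanSpace ℝ ι →L[ℝ] ℝ).hasFDerivAt
    simp only [map_mul, MvPolynomial.eval_X]
    refine (hp.fun_mul hX).congr_fderiv ?_
    ext w
    simp [MvPolynomial.pderiv_X, Pi.single_apply, add_mul, Finset.sum_add_distrib,
      Finset.mul_sum, mul_assoc, apply_ite (MvPolynomial.eval fun i => y i)]

lemma fderiv_eval_euclideanSpace_apply (p : MvPolynomial ι ℝ) (y w : EuclideanSpace ℝ ι) :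
    fderiv ℝ (fun y : EuclideanSpace ℝ ι => MvPolynomial.eval (fun i => y i) p) y w =
      ∑ i, MvPolynomial.eval (fun i => y i) (MvPolynomial.pderiv i p) * w i := by
  simp [(hasFDerivAt_eval_euclideanSpace p y).fderiv]

lemma laplacian_eval_euclideanSpace (p : MvPolynomial ι ℝ) :
    Δ (fun y : EuclideanSpace ℝ ι => MvPolynomial.eval (fun i => y i) p) =
      fun y => MvPolynomial.eval (fun i => y i)
        (∑ i, MvPolynomial.pderiv i (MvPolynomial.pderiv i p)) := by
  classical
  ext y
  rw [laplacian_eq_iteratedFDeriv_orthonormalBasis _ (EuclideanSpace.basisFun ι ℝ), map_sum]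
  refine Finset.sum_congr rfl fun i _ => ?_
  have hp' : DifferentiableAt ℝ
      (fderiv ℝ fun y : EuclideanSpace ℝ ι => MvPolynomial.eval (fun i => y i) p) y :=
    ((contDiff_eval_euclideanSpace p).fderiv_right one_add_one_eq_two.le).differentiable
      one_ne_zero y
  have hsecond (v : EuclideanSpace ℝ ι) :
      fderiv ℝ (fderiv ℝ fun y : EuclideanSpace ℝ ι => MvPolynomial.eval (fun i => y i) p) y v v =
        fderiv ℝ (fun z => fderiv ℝ (fun y : EuclideanSpace ℝ ι =>
          MvPolynomial.eval (fun i => y i) p) z v) y v := by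
    simp [fderiv_clm_apply hp' (differentiableAt_const v)]
  simp [iteratedFDeriv_two_apply, hsecond, fderiv_eval_euclideanSpace_apply]

lemma isSolidHarmonic_eval {k : ℕ} {p : MvPolynomial ι ℝ} (hhom : p.IsHomogeneous k)
    (hharm : ∑ i, MvPolynomial.pderiv i (MvPolynomial.pderiv i p) = 0) :
    IsSolidHarmonic k fun y : EuclideanSpace ℝ ι => MvPolynomial.eval (fun i => y i) p where
  harmonicOnNhd y _ := by
    refine ⟨(contDiff_eval_euclideanSpace p).contDiffAt, .of_forall fun z => ?_⟩
    simp only [laplacian_eval_euclideanSpace, hharm, map_zero, Pi.zero_apply]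
  fderiv_apply_self y := by
    have heuler := congrArg (MvPolynomial.eval fun i => y i) hhom.sum_X_mul_pderiv
    simpa [fderiv_eval_euclideanSpace_apply, mul_comm] using heuler

end EuclideanSpace

end

/-- **Theorem 2.** If the restriction of a polynomial `p ∈ ℝ[x₁,…,x_d]` to the unit
sphere `𝕊^{d-1}` is a linear combination `Σ_{k ∈ S} a_k f_k` of harmonic polynomials
`f_k` homogeneous of degree `k`, with `S` a finite set of positive integers (so `p`
has mean value zero on the sphere), then `p|_{𝕊^{d-1}}` has a zero in every geodesic
ball of radius `π² d · Σ_{k ∈ S} 1/k`. -/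
theorem poly_restriction_zero_in_geodesic_ball {d : ℕ} (hd : 2 ≤ d)
    (p : MvPolynomial (Fin d) ℝ) (S : Finset ℕ) (hS : ∀ k ∈ S, 0 < k)
    (a : ℕ → ℝ) (f : ℕ → MvPolynomial (Fin d) ℝ)
    (hhom : ∀ k ∈ S, (f k).IsHomogeneous k)
    (hharm : ∀ k ∈ S, ∑ i : Fin d, MvPolynomial.pderiv i (MvPolynomial.pderiv i (f k)) = 0)
    (hrestrict : ∀ x : EuclideanSpace ℝ (Fin d), ‖x‖ = 1 →
      MvPolynomial.eval (fun i => x i) p = ∑ k ∈ S, a k * MvPolynomial.eval (fun i => x i) (f k))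
    (x : EuclideanSpace ℝ (Fin d)) (hx : ‖x‖ = 1) :
    ∃ y : EuclideanSpace ℝ (Fin d), ‖y‖ = 1 ∧
      Real.arccos (∑ i, x i * y i) ≤ π ^ 2 * d * ∑ k ∈ S, 1 / (k : ℝ) ∧
      MvPolynomial.eval (fun i => y i) p = 0 := by
  obtain ⟨y, hy, hxy, hpy⟩ := poly_restriction_zero_in_geodesic_ball_general
    (by rwa [finrank_euclideanSpace_fin]) hS
    (fun k hk => (isSolidHarmonic_eval (hhom k hk) (hharm k hk)).const_mul (a k)) hx
  rw [finrank_euclideanSpace_fin] at hxy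
  have hπ : π ≤ π ^ 2 := le_self_pow₀ (by linarith [Real.pi_gt_three]) two_ne_zero
  exact ⟨y, hy, (arccos_sum_mul_eq_angle hx hy).trans_le (hxy.trans (by gcongr)),
    (hrestrict y hy).trans hpy⟩
end

section
/- Let d ≥ 2, k ≥ 1, and let f ∈ ℝ[x₁, …, x_d] be a nonzero harmonic polynomial homogeneous of degree k (f homogeneous of degree k with Δf = 0). Then the restriction of f to the unit sphere 𝕊^{d-1} has a zero in every geodesic ball of radius 2πd/k; that is, for every x ∈ 𝕊^{d-1} there exists y ∈ 𝕊^{d-1} with arccos⟨x, y⟩ ≤ 2πd/k and f(y) = 0. -/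
open scoped Real

/-!
Write `c(y) = (ρ² - ‖y - x‖²)⁺`. If `f` is harmonic, then `∫ c³ Δf = 0`, so integrating by parts
gives `∫ c² Df(y)(y - x) = 0`: the radial derivative of `f` is invisible to `c²`. Integrating by
parts once more turns this into `4ρ² ∫ c f = (d + 4) ∫ c² f`. If `f` is moreover homogeneous of
degree `k`, Euler's identity `k f(y) = Df(y)(y - x) + Df(y) x` gives
`k ∫ c² f = 4 ∫ c ⟪y - x, x⟫ f`. Together, `∫ c (k ρ² - (d + 4) ⟪y - x, x⟫) f = 0`. As soon as
`(d + 4) ‖x‖ < k ρ` the weight of `f` is positive on the ball of radius `ρ` around `x`, so `f`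
changes sign or vanishes identically there; in particular it has a zero in that ball.

For `‖x‖ = 1` and `k > 4d` the choice `ρ = 4d / k` is admissible because `d + 4 < 4d`, and the ball
lies in the cone of half-angle `arcsin ρ ≤ (π / 2) ρ = 2πd / k` around `x`. For `k ≤ 4d` a closed
hemisphere is allowed: `x = 0` gives `k ∫ c² f = 0`, hence a zero `y ≠ 0`, and either `y` or `-y`
will do.
-/

open Metric MeasureTheory InnerProductSpace Module
open scoped RealInnerProductSpace Gradient Laplacian

theorem hasDerivAt_posPart_pow {n : ℕ} (hn : 1 < n) (t : ℝ) :
    HasDerivAt (fun s : ℝ ↦ s⁺ ^ n) (n * t⁺ ^ (n - 1)) t := by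
  have hnonneg (ht : 0 ≤ t) :
      HasDerivWithinAt (fun s : ℝ ↦ s⁺ ^ n) (n * t⁺ ^ (n - 1)) (Set.Ici 0) t := by
    have hpow := (hasDerivAt_pow n t).hasDerivWithinAt (s := Set.Ici 0)
    rw [posPart_of_nonneg ht]
    refine hpow.congr_of_mem (fun s hs ↦ ?_) ht
    rw [posPart_of_nonneg hs]
  have hnonpos (ht : t ≤ 0) :
      HasDerivWithinAt (fun s : ℝ ↦ s⁺ ^ n) (n * t⁺ ^ (n - 1)) (Set.Iic 0) t := by
    have hzero := hasDerivWithinAt_const t (Set.Iic 0) (0 : ℝ)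
    refine (hzero.congr_of_mem (fun s hs ↦ ?_) ht).congr_deriv ?_
    · rw [posPart_of_nonpos hs, zero_pow (by lia)]
    · rw [posPart_of_nonpos ht, zero_pow (by lia), mul_zero]
  rcases lt_trichotomy t 0 with ht | rfl | ht
  · exact (hnonpos ht.le).hasDerivAt (Iic_mem_nhds ht)
  · have := (hnonpos le_rfl).union (hnonneg le_rfl)
    rwa [Set.Iic_union_Ici, hasDerivWithinAt_univ] at this
  · exact (hnonneg ht.le).hasDerivAt (Ici_mem_nhds ht)

theorem contDiff_posPart_pow {n : ℕ} (hn : 1 < n) : ContDiff ℝ 1 fun s : ℝ ↦ s⁺ ^ n := by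
  have hderiv : deriv (fun s : ℝ ↦ s⁺ ^ n) = fun t : ℝ ↦ n * t⁺ ^ (n - 1) :=
    funext fun t ↦ (hasDerivAt_posPart_pow hn t).deriv
  rw [contDiff_one_iff_deriv, hderiv]
  exact ⟨fun t ↦ (hasDerivAt_posPart_pow hn t).differentiableAt, by fun_prop⟩

theorem laplacian_eq_sum_fderiv_fderiv {E F ι : Type*} [NormedAddCommGroup E]
    [InnerProductSpace ℝ E] [FiniteDimensional ℝ E] [NormedAddCommGroup F] [NormedSpace ℝ F]
    [Fintype ι] (b : OrthonormalBasis ι ℝ E) {f : E → F} (hf : ContDiff ℝ 2 f) (y : E) :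
    Δ f y = ∑ i, fderiv ℝ (fun z ↦ fderiv ℝ f z (b i)) y (b i) := by
  have hf' : DifferentiableAt ℝ (fderiv ℝ f) y :=
    (hf.fderiv_right (m := 1) le_rfl).differentiable one_ne_zero y
  simp only [laplacian_eq_iteratedFDeriv_orthonormalBasis f b, iteratedFDeriv_two_apply]
  refine Finset.sum_congr rfl fun i _ ↦ ?_
  simp [fderiv_clm_apply hf' (differentiableAt_const _)]

section IntegrationByParts

variable {E : Type*} [NormedAddCommGroup E] [NormedSpace ℝ E] [FiniteDimensional ℝ E]
  [MeasurableSpace E] [BorelSpace E] {μ : Measure E} [μ.IsAddHaarMeasure]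

theorem integral_mul_fderiv_eq_neg_of_hasCompactSupport {φ f : E → ℝ}
    (hφ : ContDiff ℝ 1 φ) (hsupp : HasCompactSupport φ) (hf : ContDiff ℝ 1 f) (v : E) :
    ∫ y, φ y * fderiv ℝ f y v ∂μ = -∫ y, fderiv ℝ φ y v * f y ∂μ := by
  have hφ' : Continuous fun y ↦ fderiv ℝ φ y v := by fun_prop
  have hf' : Continuous fun y ↦ fderiv ℝ f y v := by fun_prop
  refine integral_mul_fderiv_eq_neg_fderiv_mul_of_integrable ?_ ?_ ?_
    (fun y _ ↦ hφ.differentiable one_ne_zero y) (fun y _ ↦ hf.differentiable one_ne_zero y)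
  · exact (hφ'.mul hf.continuous).integrable_of_hasCompactSupport (hsupp.fderiv_apply ℝ v).mul_right
  · exact (hφ.continuous.mul hf').integrable_of_hasCompactSupport hsupp.mul_right
  · exact (hφ.continuous.mul hf.continuous).integrable_of_hasCompactSupport hsupp.mul_right

theorem integral_sum_mul_fderiv_eq_neg_of_hasCompactSupport {ι : Type*} [Fintype ι]
    {φ f : ι → E → ℝ} (hφ : ∀ i, ContDiff ℝ 1 (φ i)) (hsupp : ∀ i, HasCompactSupport (φ i))
    (hf : ∀ i, ContDiff ℝ 1 (f i)) (v : ι → E) :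
    ∫ y, ∑ i, φ i y * fderiv ℝ (f i) y (v i) ∂μ =
      -∫ y, ∑ i, fderiv ℝ (φ i) y (v i) * f i y ∂μ := by
  rw [integral_finsetSum, integral_finsetSum, ← Finset.sum_neg_distrib]
  · exact Finset.sum_congr rfl fun i _ ↦
      integral_mul_fderiv_eq_neg_of_hasCompactSupport (hφ i) (hsupp i) (hf i) (v i)
  · intro i _
    have hφ' := (hφ i).continuous_fderiv one_ne_zero
    exact ((hφ'.clm_apply continuous_const).mul (hf i).continuous).integrable_of_hasCompactSupport
      ((hsupp i).fderiv_apply ℝ (v i)).mul_right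
  · intro i _
    have hf' := (hf i).continuous_fderiv one_ne_zero
    exact ((hφ i).continuous.mul (hf'.clm_apply continuous_const)).integrable_of_hasCompactSupport
      (hsupp i).mul_right

end IntegrationByParts

section InnerProductSpace

variable {E : Type*} [NormedAddCommGroup E] [InnerProductSpace ℝ E] [FiniteDimensional ℝ E]
  [MeasurableSpace E] [BorelSpace E] {μ : Measure E} [μ.IsAddHaarMeasure] {φ f : E → ℝ}

theorem integral_mul_laplacian_eq_neg (hφ : ContDiff ℝ 1 φ) (hsupp : HasCompactSupport φ)
    (hf : ContDiff ℝ 2 f) :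
    ∫ y, φ y * Δ f y ∂μ = -∫ y, fderiv ℝ f y (∇ φ y) ∂μ := by
  let b := stdOrthonormalBasis ℝ E
  have hpartial (i) : ContDiff ℝ 1 fun y ↦ fderiv ℝ f y (b i) :=
    (hf.fderiv_right (m := 1) le_rfl).clm_apply contDiff_const
  have hgrad (y : E) : fderiv ℝ f y (∇ φ y) = ∑ i, fderiv ℝ φ y (b i) * fderiv ℝ f y (b i) := by
    have hφ_grad := (hφ.differentiable one_ne_zero y).hasGradientAt
    conv_lhs => rw [← b.sum_repr' (∇ φ y)]
    simp only [map_sum, map_smul, smul_eq_mul, hφ_grad.fderiv_apply, real_inner_comm]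
  simp only [laplacian_eq_sum_fderiv_fderiv b hf, hgrad, Finset.mul_sum]
  exact integral_sum_mul_fderiv_eq_neg_of_hasCompactSupport (fun _ ↦ hφ) (fun _ ↦ hsupp) hpartial b

theorem integral_mul_fderiv_sub_eq_neg (hφ : ContDiff ℝ 1 φ) (hsupp : HasCompactSupport φ)
    (hf : ContDiff ℝ 1 f) (x : E) :
    ∫ y, φ y * fderiv ℝ f y (y - x) ∂μ =
      -∫ y, (fderiv ℝ φ y (y - x) + finrank ℝ E * φ y) * f y ∂μ := by
  let b := stdOrthonormalBasis ℝ E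
  let ψ (i) (y : E) : ℝ := φ y * ⟪b i, y - x⟫
  have hfield (y : E) : φ y * fderiv ℝ f y (y - x) = ∑ i, ψ i y * fderiv ℝ f y (b i) := by
    conv_lhs => rw [← b.sum_repr' (y - x)]
    simp only [ψ, map_sum, map_smul, smul_eq_mul, Finset.mul_sum, mul_assoc]
  have hpartial (i) (y : E) :
      fderiv ℝ (ψ i) y (b i) = ⟪b i, y - x⟫ * fderiv ℝ φ y (b i) + φ y := by
    have hinner : HasFDerivAt (fun z ↦ ⟪b i, z - x⟫) (innerSL ℝ (b i)) y :=
      (innerSL ℝ (b i)).hasFDerivAt.comp y ((hasFDerivAt_id y).sub_const x)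
    have hψ : HasFDerivAt (ψ i) _ y :=
      (hφ.differentiable one_ne_zero y).hasFDerivAt.mul hinner
    rw [hψ.fderiv]
    simp [add_comm]
  have hdiv (y : E) :
      fderiv ℝ φ y (y - x) + finrank ℝ E * φ y = ∑ i, fderiv ℝ (ψ i) y (b i) := by
    conv_lhs => rw [← b.sum_repr' (y - x)]
    simp [hpartial, Finset.sum_add_distrib]
  simp only [hfield, hdiv, Finset.sum_mul]
  exact integral_sum_mul_fderiv_eq_neg_of_hasCompactSupport
    (fun i ↦ hφ.mul (contDiff_const.inner ℝ (contDiff_id.sub contDiff_const)))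
    (fun i ↦ hsupp.mul_right) (fun _ ↦ hf) b

end InnerProductSpace

section ParaboloidBump

variable {E : Type*} [NormedAddCommGroup E]

/-- The bump `(ρ² - ‖y - x‖²)⁺`, supported in the ball of radius `ρ` around `x`. Its powers serve
as test functions; in an inner product space their gradients are radial. -/
noncomputable def paraboloidBump (x : E) (ρ : ℝ) (y : E) : ℝ := (ρ ^ 2 - ‖y - x‖ ^ 2)⁺

theorem paraboloidBump_nonneg (x : E) (ρ : ℝ) (y : E) : 0 ≤ paraboloidBump x ρ y :=
  posPart_nonneg _

theorem paraboloidBump_pos_iff {x : E} {ρ : ℝ} {y : E} (hρ : 0 ≤ ρ) :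
    0 < paraboloidBump x ρ y ↔ y ∈ ball x ρ := by
  rw [paraboloidBump, posPart_pos_iff, sub_pos, sq_lt_sq₀ (norm_nonneg _) hρ, mem_ball_iff_norm]

theorem paraboloidBump_mul_sq_norm_sub (x : E) (ρ : ℝ) (y : E) :
    paraboloidBump x ρ y * ‖y - x‖ ^ 2 =
      ρ ^ 2 * paraboloidBump x ρ y - paraboloidBump x ρ y ^ 2 := by
  unfold paraboloidBump
  rcases le_total 0 (ρ ^ 2 - ‖y - x‖ ^ 2) with h | h
  · rw [posPart_of_nonneg h]
    ring
  · rw [posPart_of_nonpos h]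
    ring

theorem continuous_paraboloidBump (x : E) (ρ : ℝ) : Continuous (paraboloidBump x ρ) := by
  unfold paraboloidBump
  fun_prop

theorem hasCompactSupport_paraboloidBump [ProperSpace E] (x : E) (ρ : ℝ) :
    HasCompactSupport (paraboloidBump x ρ) := by
  refine .of_support_subset_isCompact (isCompact_closedBall x |ρ|) fun y hy ↦ ?_
  have hpos := (paraboloidBump_nonneg x ρ y).lt_of_ne' hy
  rw [paraboloidBump, posPart_pos_iff, sub_pos, sq_lt_sq, abs_norm] at hpos
  exact mem_closedBall_iff_norm.2 hpos.le

theorem hasCompactSupport_paraboloidBump_pow [ProperSpace E] (x : E) (ρ : ℝ) {n : ℕ}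
    (hn : n ≠ 0) : HasCompactSupport fun y ↦ paraboloidBump x ρ y ^ n :=
  (hasCompactSupport_paraboloidBump x ρ).comp_left (g := (· ^ n)) (zero_pow hn)

variable [InnerProductSpace ℝ E]

theorem contDiff_paraboloidBump_pow (x : E) (ρ : ℝ) {n : ℕ} (hn : 1 < n) :
    ContDiff ℝ 1 fun y ↦ paraboloidBump x ρ y ^ n :=
  (contDiff_posPart_pow hn).comp
    (contDiff_const.sub ((contDiff_id.sub contDiff_const).norm_sq ℝ))

theorem fderiv_paraboloidBump_pow_apply (x : E) (ρ : ℝ) {n : ℕ} (hn : 1 < n) (y v : E) :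
    fderiv ℝ (fun z ↦ paraboloidBump x ρ z ^ n) y v =
      -(2 * n * paraboloidBump x ρ y ^ (n - 1)) * ⟪y - x, v⟫ := by
  have hparaboloid : HasFDerivAt (fun z ↦ ρ ^ 2 - ‖z - x‖ ^ 2) (-(2 • innerSL ℝ (y - x))) y := by
    simpa using (((hasFDerivAt_id y).sub_const x).norm_sq).const_sub (ρ ^ 2)
  change fderiv ℝ ((fun s : ℝ ↦ s⁺ ^ n) ∘ fun z ↦ ρ ^ 2 - ‖z - x‖ ^ 2) y v = _
  rw [((hasDerivAt_posPart_pow hn _).comp_hasFDerivAt y hparaboloid).fderiv]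
  simp only [map_sub, smul_neg, neg_apply, smul_apply, sub_apply, coe_innerSL_apply, nsmul_eq_mul,
    Nat.cast_ofNat, smul_eq_mul, paraboloidBump, inner_sub_left, neg_mul, neg_inj]
  ring

theorem gradient_paraboloidBump_pow [CompleteSpace E] (x : E) (ρ : ℝ) {n : ℕ} (hn : 1 < n)
    (y : E) :
    ∇ (fun z ↦ paraboloidBump x ρ z ^ n) y =
      -(2 * n * paraboloidBump x ρ y ^ (n - 1)) • (y - x) := by
  refine ext_inner_right ℝ fun v ↦ ?_
  rw [gradient, toDual_symm_apply, fderiv_paraboloidBump_pow_apply x ρ hn, real_inner_smul_left]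

end ParaboloidBump

theorem fderiv_self_of_homogeneous {E F : Type*} [NormedAddCommGroup E] [NormedSpace ℝ E]
    [NormedAddCommGroup F] [NormedSpace ℝ F] {f : E → F} {k : ℕ} {y : E}
    (hf : DifferentiableAt ℝ f y) (hhom : ∀ r : ℝ, f (r • y) = r ^ k • f y) :
    fderiv ℝ f y y = (k : ℝ) • f y := by
  have hline : HasDerivAt (fun r : ℝ ↦ f (r • y)) (fderiv ℝ f y y) 1 := by
    have hsmul : HasDerivAt (fun r : ℝ ↦ r • y) y 1 := by
      simpa using (hasDerivAt_id (1 : ℝ)).smul_const y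
    exact HasFDerivAt.comp_hasDerivAt 1 (by simpa using hf.hasFDerivAt) hsmul
  have hpow : HasDerivAt (fun r : ℝ ↦ f (r • y)) ((k : ℝ) • f y) 1 := by
    simpa [hhom] using (hasDerivAt_pow k (1 : ℝ)).smul_const (f y)
  exact hline.unique hpow

section MeanIdentities

variable {E : Type*} [NormedAddCommGroup E] [InnerProductSpace ℝ E] [FiniteDimensional ℝ E]
  {f : E → ℝ} {k : ℕ}

theorem contDiff_of_harmonicOnNhd_univ (hf : HarmonicOnNhd f Set.univ) : ContDiff ℝ 2 f :=
  contDiff_iff_contDiffAt.2 fun y ↦ (hf y (Set.mem_univ y)).1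

theorem laplacian_eq_zero_of_harmonicOnNhd_univ (hf : HarmonicOnNhd f Set.univ) : Δ f = 0 :=
  funext fun y ↦ (hf y (Set.mem_univ y)).2.self_of_nhds

variable [MeasurableSpace E] [BorelSpace E] {μ : Measure E} [μ.IsAddHaarMeasure]

theorem integral_paraboloidBump_sq_mul_fderiv_sub_eq_zero (hf : HarmonicOnNhd f Set.univ)
    (x : E) (ρ : ℝ) :
    ∫ y, paraboloidBump x ρ y ^ 2 * fderiv ℝ f y (y - x) ∂μ = 0 := by
  have hgreen := integral_mul_laplacian_eq_neg (μ := μ)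
    (contDiff_paraboloidBump_pow x ρ (n := 3) (by simp))
    (hasCompactSupport_paraboloidBump_pow x ρ three_ne_zero) (contDiff_of_harmonicOnNhd_univ hf)
  have hgrad (y : E) : fderiv ℝ f y (∇ (fun z ↦ paraboloidBump x ρ z ^ 3) y) =
      -6 * (paraboloidBump x ρ y ^ 2 * fderiv ℝ f y (y - x)) := by
    rw [gradient_paraboloidBump_pow x ρ (by simp), map_smul, smul_eq_mul]
    push_cast
    ring
  simp only [laplacian_eq_zero_of_harmonicOnNhd_univ hf, Pi.zero_apply, mul_zero, integral_zero,
    hgrad, integral_const_mul] at hgreen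
  linarith

theorem integral_paraboloidBump_sq_mul_fderiv (hf : ContDiff ℝ 1 f) (x : E) (ρ : ℝ) (v : E) :
    ∫ y, paraboloidBump x ρ y ^ 2 * fderiv ℝ f y v ∂μ =
      4 * ∫ y, paraboloidBump x ρ y * ⟪y - x, v⟫ * f y ∂μ := by
  rw [integral_mul_fderiv_eq_neg_of_hasCompactSupport
    (contDiff_paraboloidBump_pow x ρ one_lt_two)
    (hasCompactSupport_paraboloidBump_pow x ρ two_ne_zero) hf, ← integral_neg, ← integral_const_mul]
  simp only [fderiv_paraboloidBump_pow_apply x ρ one_lt_two]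
  congr! 2
  push_cast
  ring

theorem integrable_paraboloidBump_pow_mul (hf : Continuous f) (x : E) (ρ : ℝ) {n : ℕ}
    (hn : n ≠ 0) : Integrable (fun y ↦ paraboloidBump x ρ y ^ n * f y) μ :=
  (((continuous_paraboloidBump x ρ).pow n).mul hf).integrable_of_hasCompactSupport
    (hasCompactSupport_paraboloidBump_pow x ρ hn).mul_right

theorem integral_paraboloidBump_mul (hf : HarmonicOnNhd f Set.univ) (x : E) (ρ : ℝ) :
    4 * ρ ^ 2 * ∫ y, paraboloidBump x ρ y * f y ∂μ =
      (finrank ℝ E + 4) * ∫ y, paraboloidBump x ρ y ^ 2 * f y ∂μ := by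
  have hf₂ := contDiff_of_harmonicOnNhd_univ hf
  have hradial := integral_mul_fderiv_sub_eq_neg (μ := μ)
    (contDiff_paraboloidBump_pow x ρ one_lt_two)
    (hasCompactSupport_paraboloidBump_pow x ρ two_ne_zero) (hf₂.of_le one_le_two) x
  have hdiv (y : E) :
      fderiv ℝ (fun z ↦ paraboloidBump x ρ z ^ 2) y (y - x) +
        finrank ℝ E * paraboloidBump x ρ y ^ 2 =
      (finrank ℝ E + 4) * paraboloidBump x ρ y ^ 2 - 4 * ρ ^ 2 * paraboloidBump x ρ y := by
    rw [fderiv_paraboloidBump_pow_apply x ρ one_lt_two, real_inner_self_eq_norm_sq]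
    push_cast
    linear_combination -4 * paraboloidBump_mul_sq_norm_sub x ρ y
  have hint₁ := integrable_paraboloidBump_pow_mul (μ := μ) hf₂.continuous x ρ one_ne_zero
  have hint₂ := integrable_paraboloidBump_pow_mul (μ := μ) hf₂.continuous x ρ two_ne_zero
  simp only [pow_one] at hint₁
  simp only [integral_paraboloidBump_sq_mul_fderiv_sub_eq_zero hf, hdiv, sub_mul,
    mul_assoc] at hradial
  rw [integral_sub (hint₂.const_mul _) ((hint₁.const_mul _).const_mul _), integral_const_mul,
    integral_const_mul, integral_const_mul] at hradial
  linarith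

theorem integral_paraboloidBump_sq_mul (hf : HarmonicOnNhd f Set.univ)
    (hhom : ∀ (r : ℝ) y, f (r • y) = r ^ k * f y) (x : E) (ρ : ℝ) :
    k * ∫ y, paraboloidBump x ρ y ^ 2 * f y ∂μ =
      4 * ∫ y, paraboloidBump x ρ y * ⟪y - x, x⟫ * f y ∂μ := by
  have hf₁ : ContDiff ℝ 1 f := (contDiff_of_harmonicOnNhd_univ hf).of_le one_le_two
  have hint {v : E → E} (hv : Continuous v) :
      Integrable (fun y ↦ paraboloidBump x ρ y ^ 2 * fderiv ℝ f y (v y)) μ :=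
    (((continuous_paraboloidBump x ρ).pow 2).mul
      ((hf₁.continuous_fderiv one_ne_zero).clm_apply hv)).integrable_of_hasCompactSupport
        (hasCompactSupport_paraboloidBump_pow x ρ two_ne_zero).mul_right
  have heuler (y : E) : k * (paraboloidBump x ρ y ^ 2 * f y) =
      paraboloidBump x ρ y ^ 2 * fderiv ℝ f y (y - x) +
        paraboloidBump x ρ y ^ 2 * fderiv ℝ f y x := by
    rw [← mul_add, ← map_add, sub_add_cancel,
      fderiv_self_of_homogeneous (hf₁.differentiable one_ne_zero y) (hhom · y), smul_eq_mul]
    ring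
  rw [← integral_paraboloidBump_sq_mul_fderiv hf₁, ← integral_const_mul]
  simp only [heuler]
  rw [integral_add (hint (v := fun y ↦ y - x) (by fun_prop)) (hint continuous_const),
    integral_paraboloidBump_sq_mul_fderiv_sub_eq_zero hf, zero_add]

theorem integral_paraboloidBump_mul_weight_eq_zero (hf : HarmonicOnNhd f Set.univ)
    (hhom : ∀ (r : ℝ) y, f (r • y) = r ^ k * f y) (x : E) (ρ : ℝ) :
    ∫ y, paraboloidBump x ρ y * (k * ρ ^ 2 - (finrank ℝ E + 4) * ⟪y - x, x⟫) * f y ∂μ = 0 := by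
  have hcont : Continuous f := (contDiff_of_harmonicOnNhd_univ hf).continuous
  have hbump := continuous_paraboloidBump x ρ
  have hsupp := hasCompactSupport_paraboloidBump x ρ
  have hsplit (y : E) :
      paraboloidBump x ρ y * (k * ρ ^ 2 - (finrank ℝ E + 4) * ⟪y - x, x⟫) * f y =
        k * ρ ^ 2 * (paraboloidBump x ρ y * f y) -
          (finrank ℝ E + 4) * (paraboloidBump x ρ y * ⟪y - x, x⟫ * f y) := by
    ring
  simp only [hsplit]
  rw [integral_sub, integral_const_mul, integral_const_mul]
  · linear_combination (k : ℝ) / 4 * integral_paraboloidBump_mul (μ := μ) hf x ρ +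
      (finrank ℝ E + 4) / 4 * integral_paraboloidBump_sq_mul (μ := μ) hf hhom x ρ
  · exact Continuous.integrable_of_hasCompactSupport (by fun_prop)
      (hsupp.mul_right.mul_left)
  · exact Continuous.integrable_of_hasCompactSupport (by fun_prop)
      (hsupp.mul_right.mul_right.mul_left)

end MeanIdentities

theorem mul_inner_sub_lt_of_mem_ball {E : Type*} [NormedAddCommGroup E] [InnerProductSpace ℝ E]
    {x y : E} {a b ρ : ℝ} (hb : 0 ≤ b) (hab : b * ‖x‖ < a * ρ) (hy : y ∈ ball x ρ) :
    b * ⟪y - x, x⟫ < a * ρ ^ 2 := by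
  have hinner : ⟪y - x, x⟫ ≤ ρ * ‖x‖ := (real_inner_le_norm _ _).trans
    (mul_le_mul_of_nonneg_right (mem_ball_iff_norm.1 hy).le (norm_nonneg x))
  calc b * ⟪y - x, x⟫ ≤ b * (ρ * ‖x‖) := mul_le_mul_of_nonneg_left hinner hb
    _ = b * ‖x‖ * ρ := by ring
    _ < a * ρ * ρ := mul_lt_mul_of_pos_right hab (pos_of_mem_ball hy)
    _ = a * ρ ^ 2 := by ring

theorem exists_eq_zero_of_integral_mul_eq_zero {X : Type*} [TopologicalSpace X]
    [MeasurableSpace X] [OpensMeasurableSpace X] {μ : Measure X} [μ.IsOpenPosMeasure]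
    [IsFiniteMeasureOnCompacts μ] {w f : X → ℝ} {S : Set X} (hS : IsPreconnected S)
    (hw : Continuous w) (hsupp : HasCompactSupport w) (hw₀ : 0 ≤ w) (hf : Continuous f)
    (hwf : ∀ y ∉ S, w y * f y = 0) {z : X} (hz : z ∈ S) (hwz : w z ≠ 0)
    (hint : ∫ y, w y * f y ∂μ = 0) : ∃ y ∈ S, f y = 0 := by
  by_contra! hne
  have hpos {g : X → ℝ} (hg : Continuous g) (hgS : Set.MapsTo g S (Set.Ioi 0))
      (hwg : ∀ y ∉ S, w y * g y = 0) : 0 < ∫ y, w y * g y ∂μ := by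
    refine (hw.mul hg).integral_pos_of_hasCompactSupport_nonneg_nonzero hsupp.mul_right
      (fun y ↦ ?_) (x := z) (mul_ne_zero hwz (hgS hz).ne')
    by_cases hy : y ∈ S
    · exact mul_nonneg (hw₀ y) (hgS hy).le
    · exact (hwg y hy).ge
  rcases hS.mapsTo_Ioi_or_Iio hf.continuousOn (b := 0) hne with h | h
  · exact (hpos hf h hwf).ne' hint
  · have := hpos hf.neg (fun y hy ↦ by simpa using h hy) (by simpa using hwf)
    simp [integral_neg, hint] at this

theorem angle_le_of_mem_ball {E : Type*} [NormedAddCommGroup E] [InnerProductSpace ℝ E]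
    {x y : E} {ρ : ℝ} (hx : ‖x‖ = 1) (hρ : ρ ≤ 1) (hy : y ∈ ball x ρ) :
    InnerProductGeometry.angle x y ≤ π / 2 * ρ := by
  have hρ₀ : 0 < ρ := pos_of_mem_ball hy
  have hy₀ : 0 < ‖y‖ := norm_pos_iff.2 fun h ↦ by
    simp [h, hx, hρ.not_gt] at hy
  have hsqrt : √(1 - ρ ^ 2) ^ 2 = 1 - ρ ^ 2 := Real.sq_sqrt (by nlinarith)
  have hcos : √(1 - ρ ^ 2) ≤ ⟪x, y⟫ / (‖x‖ * ‖y‖) := by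
    have hdist : ‖y - x‖ ^ 2 < ρ ^ 2 :=
      pow_lt_pow_left₀ (mem_ball_iff_norm.1 hy) (norm_nonneg _) two_ne_zero
    rw [norm_sub_sq_real, hx, real_inner_comm] at hdist
    rw [hx, one_mul, le_div_iff₀ hy₀]
    linarith [two_mul_le_add_sq √(1 - ρ ^ 2) ‖y‖]
  have harcsin : Real.arcsin ρ ≤ π / 2 * ρ := by
    have hmem : π / 2 * ρ ∈ Set.Icc (-(π / 2)) (π / 2) :=
      ⟨by nlinarith [Real.pi_pos], by nlinarith [Real.pi_pos]⟩
    rw [Real.arcsin_le_iff_le_sin ⟨by linarith, hρ⟩ hmem]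
    calc ρ = 2 / π * (π / 2 * ρ) := by field_simp
      _ ≤ Real.sin (π / 2 * ρ) := Real.mul_le_sin (by positivity) hmem.2
  calc InnerProductGeometry.angle x y ≤ Real.arccos √(1 - ρ ^ 2) := Real.arccos_le_arccos hcos
    _ = Real.arcsin ρ := (Real.arcsin_eq_arccos hρ₀.le).symm
    _ ≤ π / 2 * ρ := harcsin

theorem exists_unit_eq_zero_of_homogeneous {E : Type*} [NormedAddCommGroup E]
    [InnerProductSpace ℝ E] {f : E → ℝ} {k : ℕ} (hhom : ∀ (r : ℝ) y, f (r • y) = r ^ k * f y)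
    {x y : E} (hy : y ≠ 0) (hfy : f y = 0) :
    ∃ z, ‖z‖ = 1 ∧ InnerProductGeometry.angle x z = InnerProductGeometry.angle x y ∧ f z = 0 :=
  ⟨‖y‖⁻¹ • y, norm_smul_inv_norm hy,
    InnerProductGeometry.angle_smul_right_of_pos _ _ (inv_pos.2 (norm_pos_iff.2 hy)), by
      rw [hhom, hfy, mul_zero]⟩

section Zeros

variable {E : Type*} [NormedAddCommGroup E] [InnerProductSpace ℝ E] [FiniteDimensional ℝ E]
  {f : E → ℝ} {k : ℕ}

theorem exists_mem_ball_eq_zero_of_harmonic_of_homogeneous (hf : HarmonicOnNhd f Set.univ)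
    (hhom : ∀ (r : ℝ) y, f (r • y) = r ^ k * f y) {x : E} {ρ : ℝ}
    (hkρ : (finrank ℝ E + 4) * ‖x‖ < k * ρ) : ∃ y ∈ ball x ρ, f y = 0 := by
  borelize E
  have hρ : 0 < ρ := pos_of_mul_pos_right (lt_of_le_of_lt (by positivity) hkρ) k.cast_nonneg
  let w (y : E) : ℝ := paraboloidBump x ρ y * (k * ρ ^ 2 - (finrank ℝ E + 4) * ⟪y - x, x⟫)
  have hpos {y : E} (hy : y ∈ ball x ρ) : 0 < w y :=
    mul_pos ((paraboloidBump_pos_iff hρ.le).2 hy)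
      (sub_pos.2 (mul_inner_sub_lt_of_mem_ball (by positivity) hkρ hy))
  have hout {y : E} (hy : y ∉ ball x ρ) : w y = 0 := by
    have hbump : paraboloidBump x ρ y = 0 :=
      le_antisymm (not_lt.1 (mt (paraboloidBump_pos_iff hρ.le).1 hy)) (paraboloidBump_nonneg x ρ y)
    simp only [w, hbump, zero_mul]
  have hw : Continuous w := (continuous_paraboloidBump x ρ).mul (by fun_prop)
  have hwsupp : HasCompactSupport w := (hasCompactSupport_paraboloidBump x ρ).mul_right
  have hw₀ : 0 ≤ w := fun y ↦ (em (y ∈ ball x ρ)).elim (fun hy ↦ (hpos hy).le) fun hy ↦ (hout hy).ge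
  have hz := mem_ball_self (x := x) hρ
  exact exists_eq_zero_of_integral_mul_eq_zero (convex_ball x ρ).isPreconnected hw hwsupp hw₀
    (contDiff_of_harmonicOnNhd_univ hf).continuous (fun y hy ↦ by rw [hout hy, zero_mul])
    hz (hpos hz).ne'
    (integral_paraboloidBump_mul_weight_eq_zero (μ := Measure.addHaar) hf hhom x ρ)

theorem exists_ne_zero_eq_zero_of_harmonic_of_homogeneous (hE : 1 < finrank ℝ E)
    (hf : HarmonicOnNhd f Set.univ) (hhom : ∀ (r : ℝ) y, f (r • y) = r ^ k * f y) (hk : k ≠ 0) :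
    ∃ y ≠ 0, f y = 0 := by
  borelize E
  have : Nontrivial E := Module.nontrivial_of_finrank_pos (zero_lt_one.trans hE)
  obtain ⟨z, hz, hz₁⟩ : ∃ z : E, z ≠ 0 ∧ z ∈ ball 0 2 := by
    obtain ⟨z, hz⟩ := exists_norm_eq E zero_le_one
    exact ⟨z, norm_ne_zero_iff.1 (by simp [hz]), by simp [hz]⟩
  have hf₀ : f 0 = 0 := by simpa [hk] using hhom 0 0
  have hint : ∫ y, paraboloidBump 0 2 y ^ 2 * f y ∂Measure.addHaar = 0 := by
    simpa [hk] using integral_paraboloidBump_sq_mul (μ := Measure.addHaar) hf hhom 0 2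
  exact exists_eq_zero_of_integral_mul_eq_zero
    (isConnected_compl_singleton_of_one_lt_rank (one_lt_rank_of_one_lt_finrank hE) 0).isPreconnected
    ((continuous_paraboloidBump 0 2).pow 2)
    (hasCompactSupport_paraboloidBump_pow 0 2 two_ne_zero)
    (fun y ↦ pow_nonneg (paraboloidBump_nonneg 0 2 y) 2)
    (contDiff_of_harmonicOnNhd_univ hf).continuous
    (fun y hy ↦ by rw [Set.notMem_compl_iff.1 hy, hf₀, mul_zero]) hz
    (pow_ne_zero 2 ((paraboloidBump_pos_iff zero_le_two).2 hz₁).ne') hint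

theorem exists_ne_zero_angle_le_pi_div_two_of_harmonic (hE : 1 < finrank ℝ E)
    (hf : HarmonicOnNhd f Set.univ) (hhom : ∀ (r : ℝ) y, f (r • y) = r ^ k * f y) (hk : k ≠ 0)
    (x : E) : ∃ y ≠ 0, InnerProductGeometry.angle x y ≤ π / 2 ∧ f y = 0 := by
  obtain ⟨y, hy, hfy⟩ := exists_ne_zero_eq_zero_of_harmonic_of_homogeneous hE hf hhom hk
  rcases le_total (InnerProductGeometry.angle x y) (π / 2) with h | h
  · exact ⟨y, hy, h, hfy⟩
  · refine ⟨-y, neg_ne_zero.2 hy, ?_, by simpa [hfy] using hhom (-1) y⟩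
    rw [InnerProductGeometry.angle_neg_right]
    linarith

theorem exists_ne_zero_angle_le_of_harmonic_of_lt (hE : 1 < finrank ℝ E)
    (hf : HarmonicOnNhd f Set.univ) (hhom : ∀ (r : ℝ) y, f (r • y) = r ^ k * f y)
    (hk : 4 * finrank ℝ E < k) {x : E} (hx : ‖x‖ = 1) :
    ∃ y ≠ 0, InnerProductGeometry.angle x y ≤ 2 * π * finrank ℝ E / k ∧ f y = 0 := by
  have hk₀ : (0 : ℝ) < k := by exact_mod_cast (Nat.zero_le _).trans_lt hk
  let ρ : ℝ := 4 * finrank ℝ E / k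
  have hρ : ρ < 1 := (div_lt_one hk₀).2 (by exact_mod_cast hk)
  have hkρ : (finrank ℝ E + 4) * ‖x‖ < k * ρ := by
    have : (2 : ℝ) ≤ finrank ℝ E := by exact_mod_cast hE
    rw [mul_div_cancel₀ _ hk₀.ne', hx]
    linarith
  obtain ⟨y, hy, hfy⟩ := exists_mem_ball_eq_zero_of_harmonic_of_homogeneous hf hhom hkρ
  refine ⟨y, fun h ↦ ?_, (angle_le_of_mem_ball hx hρ.le hy).trans_eq (by ring), hfy⟩
  simp [h, hx, hρ.le.not_gt] at hy

theorem harmonic_poly_zero_in_geodesic_ball_general (hE : 1 < finrank ℝ E)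
    (hf : HarmonicOnNhd f Set.univ) (hhom : ∀ (r : ℝ) y, f (r • y) = r ^ k * f y) (hk : k ≠ 0)
    {x : E} (hx : ‖x‖ = 1) :
    ∃ y, ‖y‖ = 1 ∧ InnerProductGeometry.angle x y ≤ 2 * π * finrank ℝ E / k ∧ f y = 0 := by
  have hcone : ∃ y ≠ 0, InnerProductGeometry.angle x y ≤ 2 * π * finrank ℝ E / k ∧ f y = 0 := by
    rcases lt_or_ge (4 * finrank ℝ E) k with hlt | hle
    · exact exists_ne_zero_angle_le_of_harmonic_of_lt hE hf hhom hlt hx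
    · obtain ⟨y, hy, hangle, hfy⟩ :=
        exists_ne_zero_angle_le_pi_div_two_of_harmonic hE hf hhom hk x
      have hhemisphere : π / 2 ≤ 2 * π * finrank ℝ E / k := by
        have : (k : ℝ) ≤ 4 * finrank ℝ E := by exact_mod_cast hle
        rw [div_le_div_iff₀ two_pos (by positivity)]
        nlinarith [Real.pi_pos]
      exact ⟨y, hy, hangle.trans hhemisphere, hfy⟩
  obtain ⟨y, hy, hangle, hfy⟩ := hcone
  obtain ⟨z, hz, hxz, hfz⟩ := exists_unit_eq_zero_of_homogeneous (x := x) hhom hy hfy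
  exact ⟨z, hz, hxz.trans_le hangle, hfz⟩

end Zeros

section MvPolynomial

open MvPolynomial (pderiv eval)

variable {ι : Type*} [Fintype ι]

theorem eval_smul_of_isHomogeneous {R : Type*} [CommSemiring R] {ι : Type*} {k : ℕ}
    {p : MvPolynomial ι R} (hp : p.IsHomogeneous k) (r : R) (y : ι → R) :
    eval (r • y) p = r ^ k * eval y p := by
  rw [MvPolynomial.eval_eq, MvPolynomial.eval_eq, Finset.mul_sum]
  refine Finset.sum_congr rfl fun m hm ↦ ?_
  have hdegree : ∑ i ∈ m.support, m i = k := by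
    simpa [Finsupp.weight_apply, Finsupp.sum] using hp (MvPolynomial.mem_support_iff.1 hm)
  simp only [Pi.smul_apply, smul_eq_mul, mul_pow, Finset.prod_mul_distrib,
    Finset.prod_pow_eq_pow_sum, hdegree]
  ring

theorem contDiff_eval (p : MvPolynomial ι ℝ) {n : WithTop ℕ∞} :
    ContDiff ℝ n fun y : EuclideanSpace ℝ ι ↦ eval (fun i ↦ y i) p := by
  induction p using MvPolynomial.induction_on with
  | C a => simpa using contDiff_const
  | add p q hp hq => simpa using hp.add hq
  | mul_X p i hp => simpa using hp.mul (EuclideanSpace.proj i).contDiff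

theorem fderiv_eval_single {ι : Type*} [Finite ι] [DecidableEq ι] (p : MvPolynomial ι ℝ)
    (y : EuclideanSpace ℝ ι) (i : ι) :
    fderiv ℝ (fun z : EuclideanSpace ℝ ι ↦ eval (fun j ↦ z j) p) y (EuclideanSpace.single i 1) =
      eval (fun j ↦ y j) (pderiv i p) := by
  have := Fintype.ofFinite ι
  induction p using MvPolynomial.induction_on with
  | C a => simp
  | add p q hp hq =>
    simp only [map_add]
    rw [fderiv_fun_add ((contDiff_eval p).differentiable one_ne_zero y)
      ((contDiff_eval q).differentiable one_ne_zero y), ← hp, ← hq]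
    rfl
  | mul_X p j hp =>
    let proj : EuclideanSpace ℝ ι →L[ℝ] ℝ := EuclideanSpace.proj j
    have hproj : HasFDerivAt (fun z : EuclideanSpace ℝ ι ↦ z j) proj y := proj.hasFDerivAt
    simp only [map_mul, MvPolynomial.eval_X]
    rw [fderiv_fun_mul ((contDiff_eval p).differentiable one_ne_zero y) hproj.differentiableAt,
      hproj.fderiv]
    simp [proj, hp, Pi.single_apply, apply_ite (eval fun i ↦ y i)]

theorem laplacian_eval (p : MvPolynomial ι ℝ) (y : EuclideanSpace ℝ ι) :
    Δ (fun z : EuclideanSpace ℝ ι ↦ eval (fun i ↦ z i) p) y =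
      eval (fun i ↦ y i) (∑ i, pderiv i (pderiv i p)) := by
  classical
  rw [laplacian_eq_sum_fderiv_fderiv (EuclideanSpace.basisFun ι ℝ) (contDiff_eval p)]
  simp only [EuclideanSpace.basisFun_apply, fderiv_eval_single, map_sum]

theorem harmonicOnNhd_eval {p : MvPolynomial ι ℝ} (hp : ∑ i, pderiv i (pderiv i p) = 0) :
    HarmonicOnNhd (fun y : EuclideanSpace ℝ ι ↦ eval (fun i ↦ y i) p) Set.univ :=
  fun _ _ ↦ ⟨(contDiff_eval p).contDiffAt, .of_forall fun y ↦ by simp [laplacian_eval, hp]⟩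

end MvPolynomial

/-- A nonzero harmonic polynomial `f`, homogeneous of degree `k ≥ 1` in `d ≥ 2`
variables, restricted to the unit sphere `𝕊^{d-1}` (a degree-`k` spherical harmonic),
has a zero in every geodesic ball of radius `2πd/k`. -/
theorem harmonic_poly_zero_in_geodesic_ball {d k : ℕ} (hd : 2 ≤ d) (hk : 1 ≤ k)
    (f : MvPolynomial (Fin d) ℝ) (hf0 : f ≠ 0)
    (hhom : f.IsHomogeneous k)
    (hharm : ∑ i : Fin d, MvPolynomial.pderiv i (MvPolynomial.pderiv i f) = 0)
    (x : EuclideanSpace ℝ (Fin d)) (hx : ‖x‖ = 1) :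
    ∃ y : EuclideanSpace ℝ (Fin d), ‖y‖ = 1 ∧
      Real.arccos (∑ i, x i * y i) ≤ 2 * π * d / k ∧
      MvPolynomial.eval (fun i => y i) f = 0 := by
  obtain ⟨y, hy, hangle, hfy⟩ := harmonic_poly_zero_in_geodesic_ball_general
    (hd.trans_eq finrank_euclideanSpace_fin.symm) (harmonicOnNhd_eval hharm)
    (fun r y ↦ eval_smul_of_isHomogeneous hhom r y) (Nat.one_le_iff_ne_zero.1 hk) hx
  refine ⟨y, hy, ?_, hfy⟩
  simpa [InnerProductGeometry.angle, hx, hy, PiLp.inner_apply, mul_comm] using hangle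
end

section
/- Let d ∈ {2, 3}, λ > 0, and let φ : ℝ^d → ℝ be a smooth function satisfying Δφ = −λφ on all of ℝ^d, where Δ is the Euclidean Laplacian. Then φ has a zero in every closed ball of radius 2π/√λ; that is, for every z ∈ ℝ^d there exists y with ‖y − z‖ ≤ 2π λ^{-1/2} and φ(y) = 0. -/
open scoped Real

/-- The Euclidean Laplacian `Δf(x) = Σᵢ ∂²f/∂xᵢ²(x)` of `f : ℝ^d → ℝ`. -/
noncomputable def euclidLaplacian {d : ℕ} (f : EuclideanSpace ℝ (Fin d) → ℝ)
    (x : EuclideanSpace ℝ (Fin d)) : ℝ :=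
  ∑ i, fderiv ℝ (fun y => fderiv ℝ f y (EuclideanSpace.single i 1)) x (EuclideanSpace.single i 1)

/-!
Let `φ > 0` on a compact set `K`, and let `w` be positive somewhere on `K` but nowhere on its
frontier. At a point `x` where `w / φ` is largest, `φ x • w - w x • φ` has a local maximum, so its
Laplacian is nonpositive there: this is Barta's inequality `Δw / w ≤ Δφ / φ` at `x`. On a ball of
radius `R` in dimension `n`, the function `w y = (R² - ‖y - z‖²)²` satisfies `Δw > -λw` as soon as
`(n + 2)² < 2λR²`, so no positive `φ` satisfies `Δφ ≤ -λφ` on such a ball. Applied to `φ` and to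
`-φ`, this shows that an eigenfunction takes a nonpositive and a nonnegative value on the ball, and
hence the value `0`. For the radius `2π / √λ` the condition reads `(n + 2)² < 8π²`, that is,
`n ≤ 6`.
-/

open Filter Metric Module Set Topology
open scoped InnerProductSpace Laplacian

section SecondDerivative

theorem deriv_deriv_nonpos_of_isLocalMax {f : ℝ → ℝ} {a : ℝ} (h : IsLocalMax f a)
    (hf : ContinuousAt f a) : deriv (deriv f) a ≤ 0 := by
  by_contra! hpos
  have hmin : IsLocalMin f a := isLocalMin_of_deriv_deriv_pos hpos h.deriv_eq_zero hf
  have hconst : f =ᶠ[𝓝 a] fun _ ↦ f a := (h.and hmin).mono fun _ ht ↦ ht.1.antisymm ht.2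
  have hzero : deriv (deriv f) a = 0 := by simp [hconst.deriv.deriv_eq]
  exact hpos.ne' hzero

variable {𝕜 E F : Type*} [NontriviallyNormedField 𝕜] [NormedAddCommGroup E] [NormedSpace 𝕜 E]
  [NormedAddCommGroup F] [NormedSpace 𝕜 F]

theorem deriv_deriv_comp {g : 𝕜 → F} {q : 𝕜 → 𝕜} {a : 𝕜} (hg : ContDiffAt 𝕜 2 g (q a))
    (hq : ContDiffAt 𝕜 2 q a) :
    deriv (deriv (g ∘ q)) a =
      deriv q a ^ 2 • deriv (deriv g) (q a) + deriv (deriv q) a • deriv g (q a) := by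
  have hchain : deriv (g ∘ q) =ᶠ[𝓝 a] fun t ↦ deriv q t • (deriv g ∘ q) t := by
    filter_upwards [hq.continuousAt.eventually (hg.eventually (by simp)), hq.eventually (by simp)]
      with t hgt hqt
    exact deriv.scomp t (hgt.differentiableAt two_ne_zero) (hqt.differentiableAt two_ne_zero)
  have hg' : DifferentiableAt 𝕜 (deriv g) (q a) :=
    (hg.derivWithin (m := 1) (by norm_num)).differentiableAt one_ne_zero
  have hq' : DifferentiableAt 𝕜 (deriv q) a :=
    (hq.derivWithin (m := 1) (by norm_num)).differentiableAt one_ne_zero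
  have hqa : DifferentiableAt 𝕜 q a := hq.differentiableAt two_ne_zero
  rw [hchain.deriv_eq, deriv_fun_smul hq' (hg'.comp a hqa), deriv.scomp a hg' hqa, smul_smul, sq,
    Function.comp_apply]

variable {f : E → F} {x : E}

theorem fderiv_fderiv_apply_eq_iteratedFDeriv_two (hf : ContDiffAt 𝕜 2 f x) (v : E) :
    fderiv 𝕜 (fun y ↦ fderiv 𝕜 f y v) x v = iteratedFDeriv 𝕜 2 f x ![v, v] := by
  have hf' : DifferentiableAt 𝕜 (fderiv 𝕜 f) x :=
    (hf.fderiv_right (m := 1) (by norm_num)).differentiableAt one_ne_zero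
  simp [iteratedFDeriv_two_apply, fderiv_clm_apply hf' (differentiableAt_const v)]

theorem deriv_deriv_line_eq_iteratedFDeriv_two (hf : ContDiffAt 𝕜 2 f x) (v : E) :
    deriv (deriv fun t : 𝕜 ↦ f (x + t • v)) 0 = iteratedFDeriv 𝕜 2 f x ![v, v] := by
  have hline (t : 𝕜) : HasDerivAt (fun t : 𝕜 ↦ x + t • v) v t := by
    simpa using ((hasDerivAt_id t).smul_const v).const_add x
  have hline_tendsto : Tendsto (fun t : 𝕜 ↦ x + t • v) (𝓝 0) (𝓝 x) := by
    simpa using (hline 0).continuousAt.tendsto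
  have hf' : HasFDerivAt (fun y ↦ fderiv 𝕜 f y v) (fderiv 𝕜 (fun y ↦ fderiv 𝕜 f y v) x)
      (x + (0 : 𝕜) • v) := by
    rw [zero_smul, add_zero]
    exact (((hf.fderiv_right (m := 1) (by norm_num)).differentiableAt one_ne_zero).clm_apply
      (differentiableAt_const v)).hasFDerivAt
  calc deriv (deriv fun t : 𝕜 ↦ f (x + t • v)) 0
      = deriv (fun t ↦ fderiv 𝕜 f (x + t • v) v) 0 := by
        refine EventuallyEq.deriv_eq ?_
        filter_upwards [hline_tendsto.eventually (hf.eventually (by simp))] with t ht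
        exact ((ht.differentiableAt two_ne_zero).hasFDerivAt.comp_hasDerivAt t (hline t)).deriv
    _ = fderiv 𝕜 (fun y ↦ fderiv 𝕜 f y v) x v := (hf'.comp_hasDerivAt 0 (hline 0)).deriv
    _ = iteratedFDeriv 𝕜 2 f x ![v, v] := fderiv_fderiv_apply_eq_iteratedFDeriv_two hf v

end SecondDerivative

theorem deriv_deriv_comp_norm_sq_line {E F : Type*} [NormedAddCommGroup E]
    [InnerProductSpace ℝ E] [NormedAddCommGroup F] [NormedSpace ℝ F] {g : ℝ → F} {u : E}
    (hg : ContDiffAt ℝ 2 g (‖u‖ ^ 2)) (v : E) :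
    deriv (deriv fun t : ℝ ↦ g (‖u + t • v‖ ^ 2)) 0 =
      (4 * ⟪u, v⟫_ℝ ^ 2) • deriv (deriv g) (‖u‖ ^ 2) + (2 * ‖v‖ ^ 2) • deriv g (‖u‖ ^ 2) := by
  set q : ℝ → ℝ := fun t ↦ ‖u + t • v‖ ^ 2
  have hline (t : ℝ) : HasDerivAt (fun t : ℝ ↦ u + t • v) v t := by
    simpa using ((hasDerivAt_id t).smul_const v).const_add u
  have hq : ContDiffAt ℝ 2 q 0 :=
    ((contDiff_const.add (contDiff_id.smul contDiff_const)).norm_sq ℝ).contDiffAt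
  have hq_zero : q 0 = ‖u‖ ^ 2 := by simp [q]
  have hq' : deriv q = fun t ↦ 2 * ⟪u + t • v, v⟫_ℝ := funext fun t ↦ (hline t).norm_sq.deriv
  have hq'' : deriv (deriv q) 0 = 2 * ‖v‖ ^ 2 := by
    rw [hq', (((hline 0).inner ℝ (hasDerivAt_const 0 v)).const_mul 2).deriv]
    simp
  change deriv (deriv (g ∘ q)) 0 = _
  rw [deriv_deriv_comp (hq_zero ▸ hg) hq, hq'', congrFun hq' 0, hq_zero]
  simp only [zero_smul, add_zero, mul_pow]
  norm_num

section Laplacian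

variable {E F : Type*} [NormedAddCommGroup E] [InnerProductSpace ℝ E] [FiniteDimensional ℝ E]
  [NormedAddCommGroup F] [NormedSpace ℝ F]

theorem laplacian_eq_sum_deriv_deriv {ι : Type*} [Fintype ι] (b : OrthonormalBasis ι ℝ E)
    {f : E → F} {x : E} (hf : ContDiffAt ℝ 2 f x) :
    Δ f x = ∑ i, deriv (deriv fun t : ℝ ↦ f (x + t • b i)) 0 := by
  simp only [InnerProductSpace.laplacian_eq_iteratedFDeriv_orthonormalBasis f b,
    deriv_deriv_line_eq_iteratedFDeriv_two hf]

theorem laplacian_nonpos_of_isLocalMax {f : E → ℝ} {x : E} (hf : ContDiffAt ℝ 2 f x)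
    (h : IsLocalMax f x) : Δ f x ≤ 0 := by
  rw [laplacian_eq_sum_deriv_deriv (stdOrthonormalBasis ℝ E) hf]
  refine Finset.sum_nonpos fun i _ ↦ ?_
  set line : ℝ → E := fun t ↦ x + t • stdOrthonormalBasis ℝ E i
  have hline : Continuous line := by fun_prop
  have hline_zero : line 0 = x := by simp [line]
  rw [← hline_zero] at h hf
  exact deriv_deriv_nonpos_of_isLocalMax (h.comp_continuous hline.continuousAt)
    (hf.continuousAt.comp hline.continuousAt)

theorem laplacian_comp_norm_sub_sq {g : ℝ → F} {x z : E}
    (hg : ContDiffAt ℝ 2 g (‖x - z‖ ^ 2)) :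
    Δ (fun y ↦ g (‖y - z‖ ^ 2)) x =
      (4 * ‖x - z‖ ^ 2) • deriv (deriv g) (‖x - z‖ ^ 2) +
        (2 * finrank ℝ E : ℝ) • deriv g (‖x - z‖ ^ 2) := by
  have hgnorm : ContDiffAt ℝ 2 (fun y ↦ g (‖y - z‖ ^ 2)) x :=
    hg.comp x ((contDiff_id.sub contDiff_const).norm_sq ℝ).contDiffAt
  set b := stdOrthonormalBasis ℝ E
  simp only [laplacian_eq_sum_deriv_deriv b hgnorm, add_sub_right_comm x _ z,
    deriv_deriv_comp_norm_sq_line hg, b.norm_eq_one, Finset.sum_add_distrib, ← Finset.sum_smul,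
    ← Finset.mul_sum, b.sum_sq_inner_left]
  simp [mul_comm]

theorem exists_mul_laplacian_le_mul_laplacian {K : Set E} {φ w : E → ℝ} (hK : IsCompact K)
    (hφ : ContinuousOn φ K) (hφ₂ : ContDiffOn ℝ 2 φ (interior K)) (hφ_pos : ∀ x ∈ K, 0 < φ x)
    (hw : ContinuousOn w K) (hw₂ : ContDiffOn ℝ 2 w (interior K))
    (hw_frontier : ∀ x ∈ frontier K, w x ≤ 0) (hw_pos : ∃ x ∈ K, 0 < w x) :
    ∃ x ∈ interior K, 0 < w x ∧ φ x * Δ w x ≤ w x * Δ φ x := by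
  obtain ⟨a, haK, hwa⟩ := hw_pos
  obtain ⟨x, hxK, hmax⟩ := hK.exists_isMaxOn ⟨a, haK⟩ (hw.div hφ fun y hy ↦ (hφ_pos y hy).ne')
  have hφx : 0 < φ x := hφ_pos x hxK
  have hwx : 0 < w x :=
    (div_pos_iff_of_pos_right hφx).1 ((div_pos hwa (hφ_pos a haK)).trans_le (hmax haK))
  have hx_int : x ∈ interior K := by
    by_contra hx
    exact (hw_frontier x ⟨subset_closure hxK, hx⟩).not_gt hwx
  have hx_nhds : interior K ∈ 𝓝 x := isOpen_interior.mem_nhds hx_int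
  have hw₂x : ContDiffAt ℝ 2 w x := hw₂.contDiffAt hx_nhds
  have hφ₂x : ContDiffAt ℝ 2 φ x := hφ₂.contDiffAt hx_nhds
  have hw_smul : ContDiffAt ℝ 2 (φ x • w) x := hw₂x.const_smul (φ x)
  have hφ_smul : ContDiffAt ℝ 2 (w x • φ) x := hφ₂x.const_smul (w x)
  have hlocal : IsLocalMax (φ x • w - w x • φ) x := by
    filter_upwards [hx_nhds] with y hy
    have hratio : w y / φ y ≤ w x / φ x := hmax (interior_subset hy)
    rw [div_le_div_iff₀ (hφ_pos y (interior_subset hy)) hφx] at hratio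
    simp only [Pi.sub_apply, Pi.smul_apply, smul_eq_mul]
    linarith
  have hlaplacian : Δ (φ x • w - w x • φ) x ≤ 0 :=
    laplacian_nonpos_of_isLocalMax (hw_smul.sub hφ_smul) hlocal
  rw [hw_smul.laplacian_sub hφ_smul, InnerProductSpace.laplacian_smul _ hw₂x,
    InnerProductSpace.laplacian_smul _ hφ₂x, smul_eq_mul, smul_eq_mul] at hlaplacian
  exact ⟨x, hx_int, hwx, sub_nonpos.1 hlaplacian⟩

end Laplacian

section Ball

variable {E : Type*} [NormedAddCommGroup E] [InnerProductSpace ℝ E]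

/-- The function `y ↦ (R² - ‖y - z‖²)²`, which is positive inside the ball of radius `R` about `z`
and zero on its boundary. It serves as the comparison function in place of the first Dirichlet
eigenfunction of the ball. -/
def ballBarrier (z : E) (R : ℝ) (y : E) : ℝ :=
  (R ^ 2 - ‖y - z‖ ^ 2) ^ 2

theorem contDiff_ballBarrier (z : E) (R : ℝ) {n : WithTop ℕ∞} :
    ContDiff ℝ n (ballBarrier z R) :=
  (contDiff_const.sub ((contDiff_id.sub contDiff_const).norm_sq ℝ)).pow 2

variable [FiniteDimensional ℝ E]

theorem laplacian_ballBarrier (z x : E) (R : ℝ) :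
    Δ (ballBarrier z R) x = 8 * R ^ 2 - 4 * (finrank ℝ E + 2) * (R ^ 2 - ‖x - z‖ ^ 2) := by
  have hprofile' : deriv (fun s : ℝ ↦ (R ^ 2 - s) ^ 2) = fun s ↦ -2 * (R ^ 2 - s) := by
    funext s
    simpa using (((hasDerivAt_id s).const_sub (R ^ 2)).fun_pow 2).deriv
  have hprofile'' : deriv (fun s : ℝ ↦ -2 * (R ^ 2 - s)) = fun _ ↦ 2 := by
    funext s
    simp
  have hprofile : ContDiff ℝ 2 fun s : ℝ ↦ (R ^ 2 - s) ^ 2 := by fun_prop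
  unfold ballBarrier
  rw [laplacian_comp_norm_sub_sq hprofile.contDiffAt, hprofile', hprofile'', smul_eq_mul,
    smul_eq_mul]
  ring

theorem neg_mul_ballBarrier_lt_laplacian {lam R : ℝ}
    (hdim : ((finrank ℝ E : ℝ) + 2) ^ 2 < 2 * lam * R ^ 2) (z x : E) :
    -lam * ballBarrier z R x < Δ (ballBarrier z R) x := by
  set n : ℝ := (finrank ℝ E : ℝ)
  set u : ℝ := R ^ 2 - ‖x - z‖ ^ 2
  have hlam : 0 < lam := by
    have : 0 < lam * R ^ 2 := by nlinarith [sq_nonneg (n + 2)]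
    exact pos_of_mul_pos_left this (sq_nonneg R)
  have hsquare : lam * (lam * u ^ 2 - 4 * (n + 2) * u + 8 * R ^ 2) =
      (lam * u - 2 * (n + 2)) ^ 2 + 4 * (2 * lam * R ^ 2 - (n + 2) ^ 2) := by ring
  have hquadratic : 0 < lam * u ^ 2 - 4 * (n + 2) * u + 8 * R ^ 2 :=
    pos_of_mul_pos_right (hsquare ▸ by linarith [sq_nonneg (lam * u - 2 * (n + 2))]) hlam.le
  rw [laplacian_ballBarrier, ballBarrier]
  linarith

theorem exists_nonpos_of_laplacian_le {φ : E → ℝ} {z : E} {lam R : ℝ} (hR : 0 ≤ R)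
    (hdim : ((finrank ℝ E : ℝ) + 2) ^ 2 < 2 * lam * R ^ 2)
    (hφ : ContinuousOn φ (closedBall z R)) (hφ₂ : ContDiffOn ℝ 2 φ (ball z R))
    (hsuper : ∀ x ∈ ball z R, Δ φ x ≤ -lam * φ x) :
    ∃ y ∈ closedBall z R, φ y ≤ 0 := by
  by_contra! hφ_pos
  have hR_ne : R ≠ 0 := by
    rintro rfl
    nlinarith [sq_nonneg ((finrank ℝ E : ℝ) + 2)]
  have hfrontier : ∀ x ∈ frontier (closedBall z R), ballBarrier z R x ≤ 0 := fun x hx ↦ by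
    rw [frontier_closedBall z hR_ne, mem_sphere_iff_norm] at hx
    simp [ballBarrier, hx]
  have hbarrier_cont : ContinuousOn (ballBarrier z R) (closedBall z R) :=
    (contDiff_ballBarrier z R (n := 0)).continuous.continuousOn
  have hcenter : 0 < ballBarrier z R z := by
    rw [ballBarrier, sub_self, norm_zero, zero_pow two_ne_zero, sub_zero]
    positivity
  rw [← interior_closedBall z hR_ne] at hφ₂ hsuper
  obtain ⟨x, hx, hbarrier_pos, hratio⟩ := exists_mul_laplacian_le_mul_laplacian
    (isCompact_closedBall z R) hφ hφ₂ hφ_pos hbarrier_cont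
    (contDiff_ballBarrier z R).contDiffOn hfrontier ⟨z, mem_closedBall_self hR, hcenter⟩
  have hφx : 0 < φ x := hφ_pos x (interior_subset hx)
  have hcontra : φ x * Δ (ballBarrier z R) x < φ x * Δ (ballBarrier z R) x := calc
    φ x * Δ (ballBarrier z R) x ≤ ballBarrier z R x * Δ φ x := hratio
    _ ≤ ballBarrier z R x * (-lam * φ x) := by gcongr; exact hsuper x hx
    _ = φ x * (-lam * ballBarrier z R x) := by ring
    _ < φ x * Δ (ballBarrier z R) x := by gcongr; exact neg_mul_ballBarrier_lt_laplacian hdim z x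
  exact hcontra.false

theorem global_eigenfunction_zero_in_ball_general {φ : E → ℝ} {z : E} {lam R : ℝ} (hR : 0 ≤ R)
    (hdim : ((finrank ℝ E : ℝ) + 2) ^ 2 < 2 * lam * R ^ 2)
    (hφ : ContinuousOn φ (closedBall z R)) (hφ₂ : ContDiffOn ℝ 2 φ (ball z R))
    (heig : ∀ x ∈ ball z R, Δ φ x = -lam * φ x) :
    ∃ y ∈ closedBall z R, φ y = 0 := by
  obtain ⟨a, ha, hφa⟩ := exists_nonpos_of_laplacian_le hR hdim hφ hφ₂ fun x hx ↦ (heig x hx).le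
  obtain ⟨b, hb, hφb⟩ := exists_nonpos_of_laplacian_le (φ := -φ) hR hdim hφ.neg hφ₂.neg
    fun x hx ↦ by simp [InnerProductSpace.laplacian_neg, heig x hx]
  exact (convex_closedBall z R).isPreconnected.intermediate_value ha hb hφ
    ⟨hφa, neg_nonpos.1 hφb⟩

end Ball

theorem euclidLaplacian_eq_laplacian {d : ℕ} {f : EuclideanSpace ℝ (Fin d) → ℝ}
    {x : EuclideanSpace ℝ (Fin d)} (hf : ContDiffAt ℝ 2 f x) : euclidLaplacian f x = Δ f x := by
  simp only [euclidLaplacian, fderiv_fderiv_apply_eq_iteratedFDeriv_two hf,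
    InnerProductSpace.laplacian_eq_iteratedFDeriv_orthonormalBasis f
      (EuclideanSpace.basisFun (Fin d) ℝ), EuclideanSpace.basisFun_apply]

theorem sq_add_two_lt_of_le_six {n : ℕ} (hn : n ≤ 6) {lam : ℝ} (hlam : 0 < lam) :
    ((n : ℝ) + 2) ^ 2 < 2 * lam * (2 * π / √lam) ^ 2 := by
  have hn' : (n : ℝ) ≤ 6 := by exact_mod_cast hn
  calc ((n : ℝ) + 2) ^ 2 ≤ (6 + 2) ^ 2 := by gcongr
    _ < 8 * 3 ^ 2 := by norm_num
    _ < 8 * π ^ 2 := by gcongr; exact Real.pi_gt_three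
    _ = 2 * lam * (2 * π / √lam) ^ 2 := by
      rw [div_pow, Real.sq_sqrt hlam.le]
      field_simp
      norm_num

/-- A smooth global eigenfunction `−Δφ = λφ` on `ℝ^d`, `d ∈ {2,3}`, `λ > 0`,
has a zero in every closed ball of radius `2π/√λ`. -/
theorem global_eigenfunction_zero_in_ball {d : ℕ} (hd : d = 2 ∨ d = 3)
    (lam : ℝ) (hlam : 0 < lam)
    (φ : EuclideanSpace ℝ (Fin d) → ℝ) (hφ : ContDiff ℝ (⊤ : ℕ∞) φ)
    (heig : ∀ x, euclidLaplacian φ x = -lam * φ x)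
    (z : EuclideanSpace ℝ (Fin d)) :
    ∃ y : EuclideanSpace ℝ (Fin d), ‖y - z‖ ≤ 2 * π / Real.sqrt lam ∧ φ y = 0 := by
  have hφ₂ : ContDiff ℝ 2 φ := mod_cast contDiff_infty.1 hφ 2
  have hdim : ((finrank ℝ (EuclideanSpace ℝ (Fin d)) : ℝ) + 2) ^ 2 < 2 * lam * (2 * π / √lam) ^ 2 :=
    sq_add_two_lt_of_le_six (by rw [finrank_euclideanSpace_fin]; omega) hlam
  simpa only [mem_closedBall_iff_norm] using global_eigenfunction_zero_in_ball_general
    (by positivity) hdim hφ.continuous.continuousOn hφ₂.contDiffOn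
    fun x _ ↦ (euclidLaplacian_eq_laplacian hφ₂.contDiffAt).symm.trans (heig x)
end
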